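/- Let H be a real Hilbert space, λ ∈ ℝ, and let (f_h) be a sequence of proper, λ-convex, lower semicontinuous functions f_h : H → (-∞,∞] that Mosco-converges to a proper, λ-convex, lower semicontinuous function f : H → (-∞,∞]. Let x_{h,0}, x_{h,1}, x_0, x_1 ∈ H satisfy x_{h,i} → x_i strongly for i = 0,1 and sup_h |∇f_h|(x_{h,i}) < ∞ for i = 0,1. Then the functionals Θ_{f_h, x_{h,0}, x_{h,1}} Γ-converge to Θ_{f, x_0, x_1} in the topology of C([0,1];H), i.e.: (a) for every γ ∈ C([0,1];H) there exist γ_h → γ uniformly with limsup_h Θ_{f_h,x_{h,0},x_{h,1}}(γ_h) ≤ Θ_{f,x_0,x_1}(γ); and (b) for every sequence γ_h → γ uniformly, liminf_h Θ_{f_h,x_{h,0},x_{h,1}}(γ_h) ≥ Θ_{f,x_0,x_1}(γ). -/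

import Mathlib

open Filter Topology MeasureTheory Set
open scoped ENNReal RealInnerProductSpace

noncomputable section

attribute [local instance] Classical.propDecidable

variable {H : Type*} [NormedAddCommGroup H] [InnerProductSpace ℝ H] [CompleteSpace H]

/-- `f : H → (-∞,∞]` is proper: not identically `⊤` (and it never takes the value `⊥`). -/
def ProperFn (f : H → EReal) : Prop :=
  (∃ x, f x ≠ ⊤) ∧ ∀ x, f x ≠ ⊥

/-- `f` is `λ`-convex: `x ↦ f x - (λ/2)‖x‖²` is convex, expressed via the perturbed
convexity inequality. -/
def LambdaConvex (lam : ℝ) (f : H → EReal) : Prop :=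
  ∀ x y : H, ∀ t : ℝ, 0 ≤ t → t ≤ 1 →
    f ((1 - t) • x + t • y)
      ≤ ((1 - t : ℝ) : EReal) * f x + ((t : ℝ) : EReal) * f y
        - ((lam / 2 * (t * (1 - t)) * ‖x - y‖ ^ 2 : ℝ) : EReal)

/-- The subdifferential of a `λ`-convex function at `x` (contained in the domain of `f`). -/
def subdiff (lam : ℝ) (f : H → EReal) (x : H) : Set H :=
  {p : H | f x ≠ ⊤ ∧
    ∀ y : H, f x + ((⟪p, y - x⟫ + lam / 2 * ‖y - x‖ ^ 2 : ℝ) : EReal) ≤ f y}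

/-- `∇f(x)`: the element of minimal norm of `∂f(x)` (junk value `0` if there is none). -/
def gradMin (lam : ℝ) (f : H → EReal) (x : H) : H :=
  if h : ∃ p ∈ subdiff lam f x, ∀ q ∈ subdiff lam f x, ‖p‖ ≤ ‖q‖ then h.choose else 0

/-- `|∇f|(x) ∈ [0,∞]`, equal to `+∞` when `∂f(x) = ∅` (in particular when `f x = ⊤`). -/
def gradNorm (lam : ℝ) (f : H → EReal) (x : H) : ℝ≥0∞ :=
  if (subdiff lam f x).Nonempty then ENNReal.ofReal ‖gradMin lam f x‖ else ⊤

/-- The resolvent `J_τ(x)`: the minimizer of `y ↦ f y + ‖y-x‖²/(2τ)` (junk `0` if none). -/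
def Jres (f : H → EReal) (τ : ℝ) (x : H) : H :=
  if h : ∃ y : H, ∀ z : H,
      f y + ((‖y - x‖ ^ 2 / (2 * τ) : ℝ) : EReal)
        ≤ f z + ((‖z - x‖ ^ 2 / (2 * τ) : ℝ) : EReal)
  then h.choose else 0

/-- The Moreau–Yosida regularization `f_τ(x) = min_y (f y + ‖y-x‖²/(2τ))`. -/
def moreau (f : H → EReal) (τ : ℝ) (x : H) : ℝ :=
  (f (Jres f τ x)).toReal + ‖Jres f τ x - x‖ ^ 2 / (2 * τ)

/-- `γ` is absolutely continuous on `[a,b]` with an integrable derivative. -/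
abbrev IsACCurve (a b : ℝ) (γ : ℝ → H) : Prop :=
  ∃ g : ℝ → H, IntegrableOn g (Icc a b) ∧ ∀ t ∈ Icc a b, γ t = γ a + ∫ s in a..t, g s

/-- The action `I_f^{[a,b]}(γ) = ∫_a^b (‖γ̇‖² + |∇f|²(γ)) dt ∈ [0,∞]`, set to `+∞` when `γ`
is not absolutely continuous. -/
def actionFn (lam : ℝ) (f : H → EReal) (a b : ℝ) (γ : ℝ → H) : ℝ≥0∞ :=
  if h : IsACCurve a b γ then
    ∫⁻ t in Ioc a b, (ENNReal.ofReal (‖h.choose t‖ ^ 2) + gradNorm lam f (γ t) ^ 2)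
  else ⊤

/-- `Θ_{f,x₀,x₁}`: the action on `[0,1]` with endpoint constraints. -/
def Theta (lam : ℝ) (f : H → EReal) (x0 x1 : H) (γ : ℝ → H) : ℝ≥0∞ :=
  if γ 0 = x0 ∧ γ 1 = x1 then actionFn lam f 0 1 γ else ⊤

/-- `Γ_δ(x₀,x_δ)`: infimum of the action over curves joining the endpoints. -/
def GammaInf (lam : ℝ) (f : H → EReal) (δ : ℝ) (x0 xδ : H) : ℝ≥0∞ :=
  ⨅ (γ : ℝ → H) (_ : γ 0 = x0 ∧ γ δ = xδ), actionFn lam f 0 δ γ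

/-- Mosco convergence of `fh` to `f`: recovery sequences for the strong topology, and the
`liminf` inequality along weakly convergent sequences. -/
def Mosco (fh : ℕ → H → EReal) (f : H → EReal) : Prop :=
  (∀ x : H, ∃ xh : ℕ → H, Tendsto xh atTop (𝓝 x) ∧
      Filter.limsup (fun h => fh h (xh h)) atTop ≤ f x) ∧
  (∀ (xh : ℕ → H) (x : H),
      (∀ p : H, Tendsto (fun h => ⟪xh h, p⟫) atTop (𝓝 ⟪x, p⟫)) →
      f x ≤ Filter.liminf (fun h => fh h (xh h)) atTop)

set_option linter.unusedSectionVars false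

lemma subdiff_real {lam : ℝ} {f : H → EReal} (hf : ∀ x, f x ≠ ⊥) {x p : H}
    (hp : p ∈ subdiff lam f x) : ∃ a : ℝ, f x = (a : EReal) ∧
      ∀ (y : H) (b : ℝ), f y = (b : EReal) → a + (⟪p, y - x⟫ + lam / 2 * ‖y - x‖ ^ 2) ≤ b := by
  obtain ⟨h1, h2⟩ := hp
  refine ⟨(f x).toReal, (EReal.coe_toReal h1 (hf x)).symm, fun y b hb => ?_⟩
  have h := h2 y
  rw [← EReal.coe_toReal h1 (hf x), hb] at h
  exact_mod_cast h

lemma mem_subdiff_of {lam : ℝ} {f : H → EReal} (hf : ∀ x, f x ≠ ⊥) {x p : H} {a : ℝ}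
    (hx : f x = (a : EReal))
    (h : ∀ (y : H) (b : ℝ), f y = (b : EReal) → a + (⟪p, y - x⟫ + lam / 2 * ‖y - x‖ ^ 2) ≤ b) :
    p ∈ subdiff lam f x := by
  refine ⟨by rw [hx]; exact EReal.coe_ne_top a, fun y => ?_⟩
  by_cases hy : f y = ⊤
  · rw [hy]; exact le_top
  · have hb := (EReal.coe_toReal hy (hf y)).symm
    rw [hb, hx]
    exact_mod_cast h y _ hb

lemma subdiff_mono {lam : ℝ} {f : H → EReal} (hf : ∀ x, f x ≠ ⊥) {y z p q : H}
    (hp : p ∈ subdiff lam f y) (hq : q ∈ subdiff lam f z) :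
    lam * ‖y - z‖ ^ 2 ≤ ⟪p - q, y - z⟫ := by
  obtain ⟨a, ha, h1⟩ := subdiff_real hf hp
  obtain ⟨b, hb, h2⟩ := subdiff_real hf hq
  have e1 := h1 z b hb
  have e2 := h2 y a ha
  have e3 : ⟪p, z - y⟫ = - ⟪p, y - z⟫ := by rw [← inner_neg_right, neg_sub]
  have e4 : ‖z - y‖ = ‖y - z‖ := norm_sub_rev _ _
  rw [e3, e4] at e1
  rw [inner_sub_left]
  linarith

lemma res_contr {lam : ℝ} {f : H → EReal} (hf : ∀ x, f x ≠ ⊥) {y z p q : H} {τ : ℝ} (hτ : 0 ≤ τ)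
    (hp : p ∈ subdiff lam f y) (hq : q ∈ subdiff lam f z) :
    (1 + lam * τ) * ‖y - z‖ ≤ ‖(y + τ • p) - (z + τ • q)‖ := by
  have h := subdiff_mono hf hp hq
  have e : (y + τ • p) - (z + τ • q) = (y - z) + τ • (p - q) := by
    rw [smul_sub]; abel
  rw [e]
  rcases (norm_nonneg (y - z)).eq_or_lt with h0 | h0
  · rw [← h0]; simp
  · have h1 : ⟪(y - z) + τ • (p - q), y - z⟫ ≤ ‖(y - z) + τ • (p - q)‖ * ‖y - z‖ :=
      real_inner_le_norm _ _
    rw [inner_add_left, real_inner_smul_left, real_inner_self_eq_norm_sq] at h1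
    have h2 := mul_le_mul_of_nonneg_left h hτ
    refine le_of_mul_le_mul_right ?_ h0
    nlinarith

lemma res_slope {lam : ℝ} {f : H → EReal} (hf : ∀ x, f x ≠ ⊥) {y p q : H} {τ : ℝ} (hτ : 0 < τ)
    (hp : p ∈ subdiff lam f y) (hq : q ∈ subdiff lam f (y + τ • p)) :
    (1 + lam * τ) * ‖p‖ ≤ ‖q‖ := by
  have h := subdiff_mono hf hp hq
  have e : y - (y + τ • p) = - (τ • p) := by abel
  rw [e, norm_neg, norm_smul, Real.norm_of_nonneg hτ.le, inner_neg_right, real_inner_smul_right,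
    inner_sub_left, real_inner_self_eq_norm_sq] at h
  have h1 : ⟪q, p⟫ ≤ ‖q‖ * ‖p‖ := real_inner_le_norm _ _
  rcases (norm_nonneg p).eq_or_lt with h0 | h0
  · rw [← h0]; simp
  · refine le_of_mul_le_mul_right ?_ h0
    have h2 : τ * ((1 + lam * τ) * ‖p‖ * ‖p‖) ≤ τ * (‖q‖ * ‖p‖) := by
      have := mul_le_mul_of_nonneg_left h1 hτ.le
      nlinarith
    exact le_of_mul_le_mul_left h2 hτ

lemma conv_real {lam : ℝ} {f : H → EReal} (hc : LambdaConvex lam f) {x y : H} {a b t : ℝ}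
    (hx : f x ≤ (a : EReal)) (hy : f y ≤ (b : EReal)) (h0 : 0 ≤ t) (h1 : t ≤ 1) :
    f ((1 - t) • x + t • y) ≤
      (((1 - t) * a + t * b - lam / 2 * (t * (1 - t)) * ‖x - y‖ ^ 2 : ℝ) : EReal) := by
  refine (hc x y t h0 h1).trans ?_
  rw [EReal.coe_sub ((1 - t) * a + t * b), EReal.coe_add, EReal.coe_mul, EReal.coe_mul]
  refine EReal.sub_le_sub (add_le_add ?_ ?_) le_rfl
  · exact mul_le_mul_of_nonneg_left hx (by exact_mod_cast sub_nonneg.2 h1)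
  · exact mul_le_mul_of_nonneg_left hy (by exact_mod_cast h0)

lemma res_min {lam : ℝ} {f : H → EReal} (hf : ∀ x, f x ≠ ⊥) (hc : LambdaConvex lam f)
    (hl : LowerSemicontinuous f) {x0 q : H} (hq : q ∈ subdiff lam f x0) {τ : ℝ} (hτ : 0 < τ)
    (hlt : 0 < 1 + lam * τ) (x : H) :
    ∃ (y : H) (a : ℝ), f y = (a : EReal) ∧
      ∀ z (b : ℝ), f z = (b : EReal) → a + ‖y - x‖ ^ 2 / (2 * τ) ≤ b + ‖z - x‖ ^ 2 / (2 * τ) := by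
  obtain ⟨a0, ha0, hsub⟩ := subdiff_real hf hq
  set κ : ℝ := 1 / τ + lam with hκ
  have hκpos : 0 < κ := by
    have : κ = (1 + lam * τ) / τ := by rw [hκ]; field_simp
    rw [this]; positivity
  set S : Set ℝ := {r | ∃ z, ∃ b : ℝ, f z = (b : EReal) ∧ r = b + ‖z - x‖ ^ 2 / (2 * τ)} with hS
  have hSne : S.Nonempty := ⟨_, x0, a0, ha0, rfl⟩
  have hSbdd : BddBelow S := by
    refine ⟨a0 - ‖q - (1 / τ) • (x - x0)‖ ^ 2 / (2 * κ) , ?_⟩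
    rintro r ⟨z, b, hb, rfl⟩
    have h1 := hsub z b hb
    set w := z - x0 with hw
    have e1 : z - x = w - (x - x0) := by rw [hw]; abel
    have e2 : ‖z - x‖ ^ 2 = ‖w‖ ^ 2 - 2 * ⟪w, x - x0⟫ + ‖x - x0‖ ^ 2 := by
      rw [e1, norm_sub_sq_real]
    have e3 : ⟪q - (1 / τ) • (x - x0), w⟫ = ⟪q, w⟫ - 1 / τ * ⟪w, x - x0⟫ := by
      rw [inner_sub_left, real_inner_smul_left, real_inner_comm (x - x0) w]
    have e4 : -(‖q - (1 / τ) • (x - x0)‖ * ‖w‖) ≤ ⟪q - (1 / τ) • (x - x0), w⟫ := by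
      have := abs_real_inner_le_norm (q - (1 / τ) • (x - x0)) w
      exact (abs_le.1 this).1
    set N := ‖q - (1 / τ) • (x - x0)‖
    have e5 : 0 ≤ κ / 2 * ‖w‖ ^ 2 - N * ‖w‖ + N ^ 2 / (2 * κ) := by
      have : κ / 2 * ‖w‖ ^ 2 - N * ‖w‖ + N ^ 2 / (2 * κ) = (κ * ‖w‖ - N) ^ 2 / (2 * κ) := by
        field_simp; ring
      rw [this]; positivity
    have e6 : ‖z - x‖ ^ 2 / (2 * τ) =
        1 / τ / 2 * ‖w‖ ^ 2 - 1 / τ * ⟪w, x - x0⟫ + ‖x - x0‖ ^ 2 / (2 * τ) := by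
      rw [e2]; field_simp
    have e7 : 0 ≤ ‖x - x0‖ ^ 2 / (2 * τ) := by positivity
    rw [e6]
    have e8 : κ / 2 * ‖w‖ ^ 2 = 1 / τ / 2 * ‖w‖ ^ 2 + lam / 2 * ‖w‖ ^ 2 := by rw [hκ]; ring
    linarith
  set m := sInf S with hm
  have hmle : ∀ z (b : ℝ), f z = (b : EReal) → m ≤ b + ‖z - x‖ ^ 2 / (2 * τ) :=
    fun z b hb => csInf_le hSbdd ⟨z, b, hb, rfl⟩
  have hex : ∀ n : ℕ, ∃ z, ∃ b : ℝ, f z = (b : EReal) ∧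
      b + ‖z - x‖ ^ 2 / (2 * τ) < m + 1 / ((n : ℝ) + 1) := by
    intro n
    obtain ⟨r, ⟨z, b, hb, rfl⟩, hr⟩ := exists_lt_of_csInf_lt hSne
      (show sInf S < m + 1 / ((n : ℝ) + 1) from lt_add_of_pos_right _ (by positivity))
    exact ⟨z, b, hb, hr⟩
  choose u b hb hub using hex
  have hkey : ∀ n k : ℕ, κ / 8 * ‖u n - u k‖ ^ 2 ≤
      (1 / ((n : ℝ) + 1) + 1 / ((k : ℝ) + 1)) / 2 := by
    intro n k
    have h1 := conv_real hc (hb n).le (hb k).le (t := 1 / 2) (by norm_num) (by norm_num)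
    set v := (1 - (1 / 2 : ℝ)) • u n + (1 / 2 : ℝ) • u k with hv
    have hvt : f v ≠ ⊤ := fun h => by
      rw [h] at h1; exact absurd h1 (not_le.2 (EReal.coe_lt_top _))
    have hvr := (EReal.coe_toReal hvt (hf v)).symm
    rw [hvr] at h1
    have h2 : (f v).toReal ≤ (1 - 1 / 2) * b n + 1 / 2 * b k -
      lam / 2 * (1 / 2 * (1 - 1 / 2)) * ‖u n - u k‖ ^ 2 := by exact_mod_cast h1
    have h3 := hmle v _ hvr
    have e1 : v - x = (1 / 2 : ℝ) • ((u n - x) + (u k - x)) := by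
      rw [hv]; module
    have e2 : ‖v - x‖ ^ 2 = (‖u n - x‖ ^ 2 + ‖u k - x‖ ^ 2) / 2 - ‖u n - u k‖ ^ 2 / 4 := by
      have e3 : u n - u k = (u n - x) - (u k - x) := by abel
      have p := parallelogram_law_with_norm ℝ (u n - x) (u k - x)
      rw [← e3] at p
      rw [e1, norm_smul, Real.norm_of_nonneg (by norm_num)]
      nlinarith
    rw [e2] at h3
    have h4 := hub n
    have h5 := hub k
    have e9 : κ / 8 * ‖u n - u k‖ ^ 2 = (‖u n - u k‖ ^ 2 / 4) / (2 * τ) +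
        lam / 8 * ‖u n - u k‖ ^ 2 := by rw [hκ]; field_simp; ring
    have e10 : ((‖u n - x‖ ^ 2 + ‖u k - x‖ ^ 2) / 2 - ‖u n - u k‖ ^ 2 / 4) / (2 * τ) =
      (‖u n - x‖ ^ 2 / (2 * τ) + ‖u k - x‖ ^ 2 / (2 * τ)) / 2 -
        (‖u n - u k‖ ^ 2 / 4) / (2 * τ) := by ring
    rw [e10] at h3
    rw [e9]
    linarith
  have hcau : CauchySeq u := by
    rw [Metric.cauchySeq_iff']
    intro ε hε
    obtain ⟨N, hN⟩ := exists_nat_one_div_lt (show (0 : ℝ) < κ / 8 * ε ^ 2 by positivity)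
    refine ⟨N, fun n hn => ?_⟩
    rw [dist_eq_norm]
    have h1 := hkey n N
    have h2 : 1 / ((n : ℝ) + 1) ≤ 1 / ((N : ℝ) + 1) := by
      apply one_div_le_one_div_of_le (by positivity)
      have : (N : ℝ) ≤ n := by exact_mod_cast hn
      linarith
    have h3 : ‖u n - u N‖ ^ 2 < ε ^ 2 := by
      have : κ / 8 * ‖u n - u N‖ ^ 2 < κ / 8 * ε ^ 2 := by linarith
      exact lt_of_mul_lt_mul_left this (by positivity)
    exact lt_of_pow_lt_pow_left₀ 2 hε.le h3
  obtain ⟨y, hy⟩ := cauchySeq_tendsto_of_complete hcau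
  have hfy : f y ≤ ((m - ‖y - x‖ ^ 2 / (2 * τ) : ℝ) : EReal) := by
    refine le_of_forall_lt fun c hc' => ?_
    by_contra hcon
    rw [not_lt] at hcon
    obtain ⟨d, hd1, hd2⟩ := EReal.lt_iff_exists_real_btwn.1 (lt_of_le_of_lt hcon hc')
    have hev : ∀ᶠ n in atTop, (d : EReal) < f (u n) := hy.eventually (hl y d hd2)
    have ht : Tendsto (fun n : ℕ => m + 1 / ((n : ℝ) + 1) - ‖u n - x‖ ^ 2 / (2 * τ)) atTop
        (𝓝 (m + 0 - ‖y - x‖ ^ 2 / (2 * τ))) :=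
      (tendsto_const_nhds.add tendsto_one_div_add_atTop_nhds_zero_nat).sub
        ((((hy.sub_const x).norm).pow 2).div_const _)
    have hle : d ≤ m + 0 - ‖y - x‖ ^ 2 / (2 * τ) := by
      refine ge_of_tendsto ht ?_
      filter_upwards [hev] with n hn
      rw [hb n] at hn
      have : d < b n := by exact_mod_cast hn
      have := hub n
      linarith
    have : d < d := by
      refine lt_of_le_of_lt hle ?_
      rw [add_zero]
      exact_mod_cast hd1
    exact lt_irrefl _ this
  have hyt : f y ≠ ⊤ := fun h => by
    rw [h] at hfy; exact absurd hfy (not_le.2 (EReal.coe_lt_top _))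
  have hyr := (EReal.coe_toReal hyt (hf y)).symm
  refine ⟨y, _, hyr, fun z c hz => ?_⟩
  rw [hyr] at hfy
  have h1 : (f y).toReal ≤ m - ‖y - x‖ ^ 2 / (2 * τ) := by exact_mod_cast hfy
  have h2 := hmle z c hz
  linarith

lemma res_exists {lam : ℝ} {f : H → EReal} (hf : ∀ x, f x ≠ ⊥) (hc : LambdaConvex lam f)
    (hl : LowerSemicontinuous f) {x0 q : H} (hq : q ∈ subdiff lam f x0) {τ : ℝ} (hτ : 0 < τ)
    (hlt : 0 < 1 + lam * τ) (x : H) :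
    ∃ y p : H, p ∈ subdiff lam f y ∧ y + τ • p = x := by
  obtain ⟨y, a, hy, hmin⟩ := res_min hf hc hl hq hτ hlt x
  refine ⟨y, (1 / τ) • (x - y), mem_subdiff_of hf hy fun z b hz => ?_, ?_⟩
  swap
  · rw [smul_smul, mul_one_div_cancel hτ.ne', one_smul]; abel
  have hkey : ∀ t : ℝ, 0 < t → t ≤ 1 → a + (⟪(1 / τ) • (x - y), z - y⟫ +
      lam / 2 * ‖z - y‖ ^ 2) ≤ b + t * (lam / 2 * ‖z - y‖ ^ 2 + ‖z - y‖ ^ 2 / (2 * τ)) := by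
    intro t ht0 ht1
    have h1 := conv_real hc hy.le hz.le ht0.le ht1
    set v := (1 - t) • y + t • z with hv
    have hvt : f v ≠ ⊤ := fun h => by
      rw [h] at h1; exact absurd h1 (not_le.2 (EReal.coe_lt_top _))
    have hvr := (EReal.coe_toReal hvt (hf v)).symm
    rw [hvr] at h1
    have h2 : (f v).toReal ≤ (1 - t) * a + t * b -
      lam / 2 * (t * (1 - t)) * ‖y - z‖ ^ 2 := by exact_mod_cast h1
    have h3 := hmin v _ hvr
    have e1 : v - x = t • (z - y) - (x - y) := by rw [hv]; module
    have e2 : ‖v - x‖ ^ 2 = t ^ 2 * ‖z - y‖ ^ 2 - 2 * (t * ⟪x - y, z - y⟫) + ‖x - y‖ ^ 2 := by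
      rw [e1, norm_sub_sq_real, norm_smul, Real.norm_of_nonneg ht0.le, real_inner_smul_left,
        mul_pow, real_inner_comm]
    rw [e2, norm_sub_rev y x] at h3
    rw [norm_sub_rev y z] at h2
    rw [real_inner_smul_left]
    have e3 : (t ^ 2 * ‖z - y‖ ^ 2 - 2 * (t * ⟪x - y, z - y⟫) + ‖x - y‖ ^ 2) / (2 * τ) =
      t * (t * (‖z - y‖ ^ 2 / (2 * τ)) - 1 / τ * ⟪x - y, z - y⟫) + ‖x - y‖ ^ 2 / (2 * τ) := by
      field_simp
    rw [e3] at h3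
    refine le_of_mul_le_mul_left ?_ ht0
    nlinarith
  have ht : Tendsto (fun t : ℝ => b + t * (lam / 2 * ‖z - y‖ ^ 2 + ‖z - y‖ ^ 2 / (2 * τ)))
      (𝓝[>] 0) (𝓝 (b + 0 * (lam / 2 * ‖z - y‖ ^ 2 + ‖z - y‖ ^ 2 / (2 * τ)))) := by
    refine Tendsto.mono_left ?_ nhdsWithin_le_nhds
    exact Continuous.tendsto (by fun_prop) 0
  rw [zero_mul, add_zero] at ht
  refine ge_of_tendsto ht ?_
  have : Ioc (0 : ℝ) 1 ∈ 𝓝[>] (0 : ℝ) := Ioc_mem_nhdsGT one_pos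
  filter_upwards [this] with t ht
  exact hkey t ht.1 ht.2

lemma gradNorm_le {lam : ℝ} {f : H → EReal} {x p : H} (hp : p ∈ subdiff lam f x) :
    gradNorm lam f x ≤ ENNReal.ofReal ‖p‖ := by
  unfold gradNorm
  rw [if_pos ⟨p, hp⟩]
  apply ENNReal.ofReal_le_ofReal
  unfold gradMin
  split_ifs with h
  · exact h.choose_spec.2 p hp
  · simp

lemma gradNorm_exists {lam : ℝ} {f : H → EReal} {x : H} (hg : gradNorm lam f x ≠ ⊤) :
    ∃ p ∈ subdiff lam f x, gradNorm lam f x = ENNReal.ofReal ‖p‖ := by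
  have hne : (subdiff lam f x).Nonempty := by
    by_contra h
    apply hg
    unfold gradNorm
    rw [if_neg h]
  have hex : ∃ p ∈ subdiff lam f x, ∀ q ∈ subdiff lam f x, ‖p‖ ≤ ‖q‖ := by
    have hT : f x ≠ ⊤ := hne.choose_spec.1
    have hclosed : IsClosed (subdiff lam f x) := by
      have : subdiff lam f x = ⋂ y, {p : H | f x +
          ((⟪p, y - x⟫ + lam / 2 * ‖y - x‖ ^ 2 : ℝ) : EReal) ≤ f y} := by
        ext p
        simp only [subdiff, mem_ofPred_eq, mem_iInter]
        exact ⟨fun h => h.2, fun h => ⟨hT, h⟩⟩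
      rw [this]
      refine isClosed_iInter fun y => ?_
      by_cases hB : f x = ⊥
      · simp [hB]
      · rw [← EReal.coe_toReal hT hB]
        have : {p : H | (((f x).toReal : ℝ) : EReal) +
          ((⟪p, y - x⟫ + lam / 2 * ‖y - x‖ ^ 2 : ℝ) : EReal) ≤ f y} = {p : H |
          (((f x).toReal + (⟪p, y - x⟫ + lam / 2 * ‖y - x‖ ^ 2) : ℝ) : EReal) ≤ f y} := by
          ext p; simp only [mem_ofPred_eq]; rw [← EReal.coe_add]
        rw [this]
        refine isClosed_le ?_ continuous_const
        exact continuous_coe_real_ereal.comp (by fun_prop)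
    have hconv : Convex ℝ (subdiff lam f x) := by
      intro p hp q hq a b ha hb hab
      refine ⟨hT, fun y => ?_⟩
      by_cases hB : f x = ⊥
      · simp [hB]
      have h1 := hp.2 y
      have h2 := hq.2 y
      by_cases hy : f y = ⊤
      · rw [hy]; exact le_top
      by_cases hyB : f y = ⊥
      · rw [hyB, ← EReal.coe_toReal hT hB] at h1
        rw [← EReal.coe_add] at h1
        exact absurd h1 (not_le.2 (EReal.bot_lt_coe _))
      rw [← EReal.coe_toReal hT hB, ← EReal.coe_toReal hy hyB] at h1 h2 ⊢
      have h1' : (f x).toReal + (⟪p, y - x⟫ + lam / 2 * ‖y - x‖ ^ 2) ≤ (f y).toReal := by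
        exact_mod_cast h1
      have h2' : (f x).toReal + (⟪q, y - x⟫ + lam / 2 * ‖y - x‖ ^ 2) ≤ (f y).toReal := by
        exact_mod_cast h2
      have : (f x).toReal + (⟪a • p + b • q, y - x⟫ + lam / 2 * ‖y - x‖ ^ 2) ≤ (f y).toReal := by
        rw [inner_add_left, real_inner_smul_left, real_inner_smul_left]
        have hb' : b = 1 - a := by linarith
        subst hb'
        nlinarith [mul_le_mul_of_nonneg_left h1' ha, mul_le_mul_of_nonneg_left h2' hb]
      exact_mod_cast this
    obtain ⟨p, hp, hmin⟩ := exists_norm_eq_iInf_of_complete_convex hne hclosed.isComplete hconv 0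
    refine ⟨p, hp, fun q hq => ?_⟩
    have hle : (⨅ w : subdiff lam f x, ‖(0 : H) - w‖) ≤ ‖(0 : H) - q‖ :=
      ciInf_le ⟨0, by rintro _ ⟨w, rfl⟩; exact norm_nonneg _⟩ (⟨q, hq⟩ : subdiff lam f x)
    rw [← hmin] at hle
    simpa using hle
  refine ⟨hex.choose, hex.choose_spec.1, ?_⟩
  unfold gradNorm gradMin
  rw [if_pos hne, dif_pos hex]

lemma weak_seq_compact (x : ℕ → H) (C : ℝ) (hx : ∀ n, ‖x n‖ ≤ C) :
    ∃ (y : H) (φ : ℕ → ℕ), StrictMono φ ∧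
      ∀ p : H, Tendsto (fun k => ⟪x (φ k), p⟫) atTop (𝓝 ⟪y, p⟫) := by
  set S : Submodule ℝ H := (Submodule.span ℝ (range x)).topologicalClosure with hS
  have hSc : IsClosed (S : Set H) := Submodule.isClosed_topologicalClosure _
  have : CompleteSpace S := hSc.completeSpace_coe
  have : TopologicalSpace.SeparableSpace S := by
    have h1 : TopologicalSpace.IsSeparable (S : Set H) := by
      rw [hS, Submodule.topologicalClosure_coe]
      exact ((countable_range x).isSeparable.span (R := ℝ)).closure
    exact h1.separableSpace
  have hxS : ∀ n, x n ∈ S := fun n =>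
    Submodule.le_topologicalClosure _ (Submodule.subset_span ⟨n, rfl⟩)
  let u : ℕ → WeakDual ℝ S := fun n => StrongDual.toWeakDual
    (InnerProductSpace.toDual ℝ S ⟨x n, hxS n⟩)
  have hcomp := WeakDual.isSeqCompact_closedBall (𝕜 := ℝ) (E := S) 0 C
  have hu : ∀ n, u n ∈ (WeakDual.toStrongDual ⁻¹' Metric.closedBall (0 : StrongDual ℝ S) C) := by
    intro n
    simp only [mem_preimage]
    have : WeakDual.toStrongDual (u n) = InnerProductSpace.toDual ℝ S ⟨x n, hxS n⟩ := rfl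
    rw [this]
    have h2 : ‖InnerProductSpace.toDual ℝ S ⟨x n, hxS n⟩‖ ≤ C := by
      rw [LinearIsometryEquiv.norm_map]
      exact hx n
    exact (mem_closedBall_zero_iff (E := StrongDual ℝ S)).2 h2
  obtain ⟨l, _, φ, hφ, hlim⟩ := hcomp hu
  refine ⟨((InnerProductSpace.toDual ℝ S).symm (WeakDual.toStrongDual l) : S), φ, hφ, fun p => ?_⟩
  have h1 := (WeakDual.eval_continuous (𝕜 := ℝ) (S.orthogonalProjectionOnto p)).tendsto l |>.comp hlim
  have h2 : ∀ n, ⟪x n, p⟫ = u n (S.orthogonalProjectionOnto p) := by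
    intro n
    have : u n (S.orthogonalProjectionOnto p) = ⟪(⟨x n, hxS n⟩ : S), S.orthogonalProjectionOnto p⟫ := rfl
    rw [this, Submodule.inner_orthogonalProjectionOnto_eq_of_mem_left]
  have h3 : ⟪(((InnerProductSpace.toDual ℝ S).symm (WeakDual.toStrongDual l) : S) : H), p⟫ =
      l (S.orthogonalProjectionOnto p) := by
    have : l (S.orthogonalProjectionOnto p) = ⟪(InnerProductSpace.toDual ℝ S).symm
      (WeakDual.toStrongDual l), S.orthogonalProjectionOnto p⟫ := by
      rw [InnerProductSpace.toDual_symm_apply]; rfl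
    rw [this, Submodule.inner_orthogonalProjectionOnto_eq_of_mem_left]
  rw [h3]
  simp_rw [h2]
  exact h1

lemma weak_strong {p w : ℕ → H} {p0 w0 : H} {C : ℝ} (hC : ∀ n, ‖p n‖ ≤ C)
    (hp : ∀ q : H, Tendsto (fun k => ⟪p k, q⟫) atTop (𝓝 ⟪p0, q⟫))
    (hw : Tendsto w atTop (𝓝 w0)) : Tendsto (fun k => ⟪p k, w k⟫) atTop (𝓝 ⟪p0, w0⟫) := by
  have h1 : Tendsto (fun k => ⟪p k, w k - w0⟫) atTop (𝓝 0) := by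
    have h2 : Tendsto (fun k => C * ‖w k - w0‖) atTop (𝓝 (C * 0)) := by
      refine Tendsto.const_mul C ?_
      simpa using (hw.sub_const w0).norm
    rw [mul_zero] at h2
    refine squeeze_zero_norm (fun k => ?_) h2
    rw [Real.norm_eq_abs]
    exact (abs_real_inner_le_norm _ _).trans
      (mul_le_mul_of_nonneg_right (hC k) (norm_nonneg _))
  have h3 := (hp w0).add h1
  rw [add_zero] at h3
  refine h3.congr fun k => ?_
  rw [← inner_add_right]; congr 1; abel

lemma mosco_liminf {fh : ℕ → H → EReal} {f : H → EReal} (hM : Mosco fh f) {φ : ℕ → ℕ}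
    (hφ : StrictMono φ) {y : ℕ → H} {y0 : H}
    (hy : ∀ p : H, Tendsto (fun k => ⟪y k, p⟫) atTop (𝓝 ⟪y0, p⟫)) (b : ℝ)
    (hb : (b : EReal) < f y0) : ∀ᶠ k in atTop, (b : EReal) < fh (φ k) (y k) := by
  let x : ℕ → H := fun h => if hh : ∃ k, φ k = h then y hh.choose else y0
  have hxφ : ∀ k, x (φ k) = y k := by
    intro k
    have hh : ∃ j, φ j = φ k := ⟨k, rfl⟩
    simp only [x]
    rw [dif_pos hh]
    congr 1
    exact hφ.injective hh.choose_spec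
  have hx : ∀ p : H, Tendsto (fun h => ⟪x h, p⟫) atTop (𝓝 ⟪y0, p⟫) := by
    intro p
    rw [Metric.tendsto_atTop]
    intro ε hε
    obtain ⟨K, hK⟩ := Metric.tendsto_atTop.1 (hy p) ε hε
    refine ⟨φ K, fun h hh => ?_⟩
    by_cases hk : ∃ k, φ k = h
    · obtain ⟨k, rfl⟩ := hk
      rw [hxφ]
      exact hK k (hφ.le_iff_le.1 hh)
    · simp only [x]
      rw [dif_neg hk]
      simpa using hε
  have h1 := lt_of_lt_of_le hb (hM.2 x y0 hx)
  have h2 := eventually_lt_of_lt_liminf h1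
  have h3 := hφ.tendsto_atTop.eventually h2
  filter_upwards [h3] with k hk
  rwa [hxφ] at hk

lemma mosco_limsup {fh : ℕ → H → EReal} {f : H → EReal} (hM : Mosco fh f) (z : H) (a : ℝ)
    (hz : f z = (a : EReal)) : ∃ zh : ℕ → H, Tendsto zh atTop (𝓝 z) ∧
      ∀ ε : ℝ, 0 < ε → ∀ᶠ h in atTop, fh h (zh h) ≤ ((a + ε : ℝ) : EReal) := by
  obtain ⟨zh, h1, h2⟩ := hM.1 z
  refine ⟨zh, h1, fun ε hε => ?_⟩
  have h3 : limsup (fun h => fh h (zh h)) atTop < ((a + ε : ℝ) : EReal) := by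
    refine lt_of_le_of_lt h2 ?_
    rw [hz]
    exact_mod_cast lt_add_of_pos_right a hε
  filter_upwards [eventually_lt_of_limsup_lt h3] with h hh using hh.le

lemma subdiff_le {lam : ℝ} {f : H → EReal} (hf : ∀ x, f x ≠ ⊥) {x p z : H} {b c : ℝ}
    (hp : p ∈ subdiff lam f x) (hb : (b : EReal) ≤ f x) (hc : f z ≤ (c : EReal)) :
    b + (⟪p, z - x⟫ + lam / 2 * ‖z - x‖ ^ 2) ≤ c := by
  obtain ⟨a, ha, h⟩ := subdiff_real hf hp
  have hzt : f z ≠ ⊤ := fun h' => by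
    rw [h'] at hc; exact absurd hc (not_le.2 (EReal.coe_lt_top _))
  have hz := (EReal.coe_toReal hzt (hf z)).symm
  have h1 := h z _ hz
  rw [hz] at hc
  rw [ha] at hb
  have h2 : (f z).toReal ≤ c := by exact_mod_cast hc
  have h3 : b ≤ a := by exact_mod_cast hb
  linarith

lemma subdiff_closed {lam : ℝ} {F : ℕ → H → EReal} {f : H → EReal} (hF : ∀ k x, F k x ≠ ⊥)
    (hf : ProperFn f) {x p : ℕ → H} {x0 p0 : H} {C : ℝ}
    (hL : ∀ b : ℝ, (b : EReal) < f x0 → ∀ᶠ k in atTop, (b : EReal) < F k (x k))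
    (hR : ∀ z (a : ℝ), f z = (a : EReal) → ∃ zh : ℕ → H, Tendsto zh atTop (𝓝 z) ∧
      ∀ ε : ℝ, 0 < ε → ∀ᶠ h in atTop, F h (zh h) ≤ ((a + ε : ℝ) : EReal))
    (hx : Tendsto x atTop (𝓝 x0)) (hC : ∀ n, ‖p n‖ ≤ C)
    (hp : ∀ q : H, Tendsto (fun k => ⟪p k, q⟫) atTop (𝓝 ⟪p0, q⟫))
    (hs : ∀ k, p k ∈ subdiff lam (F k) (x k)) : p0 ∈ subdiff lam f x0 := by
  have key : ∀ z (a : ℝ), f z = (a : EReal) → ∀ b : ℝ, (b : EReal) < f x0 →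
      b + (⟪p0, z - x0⟫ + lam / 2 * ‖z - x0‖ ^ 2) ≤ a := by
    intro z a hz b hb
    obtain ⟨zh, hzh, hlim⟩ := hR z a hz
    refine le_of_forall_pos_le_add fun ε hε => ?_
    have h1 : Tendsto (fun k => b + (⟪p k, zh k - x k⟫ + lam / 2 * ‖zh k - x k‖ ^ 2)) atTop
        (𝓝 (b + (⟪p0, z - x0⟫ + lam / 2 * ‖z - x0‖ ^ 2))) := by
      refine tendsto_const_nhds.add ((weak_strong hC hp (hzh.sub hx)).add ?_)
      exact tendsto_const_nhds.mul ((hzh.sub hx).norm.pow 2)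
    refine le_of_tendsto h1 ?_
    filter_upwards [hL b hb, hlim ε hε] with k hk1 hk2
    exact subdiff_le (hF k) (hs k) hk1.le hk2
  have hfin : f x0 ≠ ⊤ := by
    intro htop
    obtain ⟨z, hz⟩ := hf.1
    have hz' := (EReal.coe_toReal hz (hf.2 z)).symm
    have := key z _ hz' ((f z).toReal - (⟪p0, z - x0⟫ + lam / 2 * ‖z - x0‖ ^ 2) + 1)
      (by rw [htop]; exact EReal.coe_lt_top _)
    linarith
  have hx0 := (EReal.coe_toReal hfin (hf.2 x0)).symm
  refine mem_subdiff_of hf.2 hx0 fun z a hz => ?_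
  refine le_of_forall_pos_le_add fun ε hε => ?_
  have := key z a hz ((f x0).toReal - ε) (by
    rw [hx0]
    simp only [EReal.toReal_coe]
    exact_mod_cast sub_lt_self _ hε)
  linarith

lemma gradNorm_liminf {lam : ℝ} {F : ℕ → H → EReal} {f : H → EReal} (hF : ∀ k x, F k x ≠ ⊥)
    (hf : ProperFn f) {x : ℕ → H} {x0 : H}
    (hL : ∀ b : ℝ, (b : EReal) < f x0 → ∀ᶠ k in atTop, (b : EReal) < F k (x k))
    (hR : ∀ z (a : ℝ), f z = (a : EReal) → ∃ zh : ℕ → H, Tendsto zh atTop (𝓝 z) ∧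
      ∀ ε : ℝ, 0 < ε → ∀ᶠ h in atTop, F h (zh h) ≤ ((a + ε : ℝ) : EReal))
    (hx : Tendsto x atTop (𝓝 x0)) :
    gradNorm lam f x0 ≤ liminf (fun k => gradNorm lam (F k) (x k)) atTop := by
  by_contra hcon
  rw [not_le] at hcon
  obtain ⟨c, hc1, hc2⟩ := ENNReal.lt_iff_exists_nnreal_btwn.1 hcon
  have hfreq := frequently_lt_of_liminf_lt (by isBoundedDefault) hc1
  obtain ⟨φ, hφ, hlt⟩ := extraction_of_frequently_atTop hfreq
  have hex : ∀ n, ∃ p ∈ subdiff lam (F (φ n)) (x (φ n)), ‖p‖ ≤ (c : ℝ) := by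
    intro n
    have h1 := hlt n
    obtain ⟨p, hp, he⟩ := gradNorm_exists (ne_top_of_lt h1)
    refine ⟨p, hp, ?_⟩
    rw [he] at h1
    have h2 := (ENNReal.ofReal_lt_coe_iff (norm_nonneg _)).1 h1
    exact h2.le
  choose p hp hpc using hex
  obtain ⟨p0, ψ, hψ, hw⟩ := weak_seq_compact p c hpc
  have hφψ : Tendsto (fun k => φ (ψ k)) atTop atTop := (hφ.comp hψ).tendsto_atTop
  have hmem : p0 ∈ subdiff lam f x0 := by
    refine subdiff_closed (F := fun k => F (φ (ψ k))) (fun k => hF _) hf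
      (x := fun k => x (φ (ψ k))) (p := fun k => p (ψ k)) (C := c)
      (fun b hb => hφψ.eventually (hL b hb)) ?_ (hx.comp hφψ) (fun n => hpc _) hw (fun k => hp _)
    intro z a hz
    obtain ⟨zh, h1, h2⟩ := hR z a hz
    exact ⟨fun k => zh (φ (ψ k)), h1.comp hφψ, fun ε hε => hφψ.eventually (h2 ε hε)⟩
  have hnorm : ‖p0‖ ≤ (c : ℝ) := by
    have h1 : ⟪p0, p0⟫ ≤ (c : ℝ) * ‖p0‖ := by
      refine le_of_tendsto (hw p0) (Eventually.of_forall fun k => ?_)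
      exact (real_inner_le_norm _ _).trans (mul_le_mul_of_nonneg_right (hpc _) (norm_nonneg _))
    rw [real_inner_self_eq_norm_sq] at h1
    rcases (norm_nonneg p0).eq_or_lt with h0 | h0
    · rw [← h0]; exact c.2
    · exact le_of_mul_le_mul_right (by nlinarith) h0
  have h2 := gradNorm_le hmem
  have h3 : ENNReal.ofReal ‖p0‖ ≤ c := by
    rw [← ENNReal.ofReal_coe_nnreal]
    exact ENNReal.ofReal_le_ofReal hnorm
  exact absurd (hc2.trans_le (h2.trans h3)) (lt_irrefl _)

lemma gradNorm_lsc {lam : ℝ} {f : H → EReal} (hf : ProperFn f) (hl : LowerSemicontinuous f) :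
    LowerSemicontinuous (gradNorm lam f) := by
  rw [lowerSemicontinuous_iff_isClosed_preimage]
  intro c
  refine IsSeqClosed.isClosed fun x x0 hx hlim => ?_
  have h := gradNorm_liminf (lam := lam) (F := fun _ => f) (fun _ => hf.2) hf (x := x) (x0 := x0)
    (fun b hb => hlim.eventually (hl x0 b hb))
    (fun z a hz => ⟨fun _ => z, tendsto_const_nhds, fun ε hε => Eventually.of_forall fun _ => by
      rw [hz]; exact_mod_cast (lt_add_of_pos_right a hε).le⟩) hlim
  refine h.trans ?_
  refine liminf_le_of_frequently_le' (Frequently.of_forall fun n => ?_)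
  exact hx n

lemma res_conv {lam : ℝ} {fh : ℕ → H → EReal} {f : H → EReal} (hF : ∀ k x, fh k x ≠ ⊥)
    (hf : ProperFn f) (hM : Mosco fh f) {x0 q : ℕ → H} {C : ℝ} (hx0 : ∀ h, ‖x0 h‖ ≤ C)
    (hqC : ∀ h, ‖q h‖ ≤ C) (hq : ∀ h, q h ∈ subdiff lam (fh h) (x0 h)) {τ : ℝ} (hτ : 0 < τ)
    (hlt : 0 < 1 + lam * τ) (x : H) {y p : ℕ → H} (hp : ∀ h, p h ∈ subdiff lam (fh h) (y h))
    (hyp : ∀ h, y h + τ • p h = x) :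
    ∃ y0 p0 : H, p0 ∈ subdiff lam f y0 ∧ y0 + τ • p0 = x ∧ Tendsto y atTop (𝓝 y0) := by
  -- boundedness
  obtain ⟨D, hD⟩ : ∃ D : ℝ, ∀ h, ‖y h‖ ≤ D := by
    refine ⟨(‖x‖ + C + τ * C) / (1 + lam * τ) + C, fun h => ?_⟩
    have h1 := res_contr (hF h) hτ.le (hp h) (hq h)
    rw [hyp h] at h1
    have h2 : ‖x - (x0 h + τ • q h)‖ ≤ ‖x‖ + C + τ * C := by
      refine (norm_sub_le _ _).trans ?_
      have h3 := norm_add_le (x0 h) (τ • q h)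
      rw [norm_smul, Real.norm_of_nonneg hτ.le] at h3
      have := mul_le_mul_of_nonneg_left (hqC h) hτ.le
      have := hx0 h
      linarith
    have h3 : ‖y h - x0 h‖ ≤ (‖x‖ + C + τ * C) / (1 + lam * τ) := by
      rw [le_div_iff₀ hlt]; linarith
    have h4 : ‖y h‖ ≤ ‖y h - x0 h‖ + ‖x0 h‖ := by
      simpa using norm_add_le (y h - x0 h) (x0 h)
    have := hx0 h
    linarith
  have hpe : ∀ h, p h = (1 / τ) • (x - y h) := by
    intro h
    rw [← hyp h, add_sub_cancel_left, smul_smul, one_div_mul_cancel hτ.ne', one_smul]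
  have hpD : ∀ h, ‖p h‖ ≤ 1 / τ * (‖x‖ + D) := by
    intro h
    rw [hpe, norm_smul, Real.norm_of_nonneg (by positivity)]
    refine mul_le_mul_of_nonneg_left ?_ (by positivity)
    exact (norm_sub_le _ _).trans (by linarith [hD h])
  -- subsequences
  have hsub : ∀ φ : ℕ → ℕ, StrictMono φ → ∃ (ψ : ℕ → ℕ) (y0 : H), StrictMono ψ ∧
      (1 / τ) • (x - y0) ∈ subdiff lam f y0 ∧ Tendsto (fun k => y (φ (ψ k))) atTop (𝓝 y0) := by
    intro φ hφ
    obtain ⟨y0, ψ, hψ, hw⟩ := weak_seq_compact (fun k => y (φ k)) D (fun k => hD _)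
    refine ⟨ψ, y0, hψ, ?_⟩
    have hφψ : StrictMono (fun k => φ (ψ k)) := hφ.comp hψ
    have hL := fun b hb => mosco_liminf hM hφψ hw b hb
    have hfin : f y0 ≠ ⊤ := by
      intro htop
      obtain ⟨z, hz⟩ := hf.1
      have hz' := (EReal.coe_toReal hz (hf.2 z)).symm
      obtain ⟨zh, hzh, hlim⟩ := mosco_limsup hM z _ hz'
      obtain ⟨E, hE⟩ := (hzh.norm).bddAbove_range
      have hE' : ∀ h, ‖zh h‖ ≤ E := fun h => hE ⟨h, rfl⟩
      set B : ℝ := 1 / τ * (‖x‖ + D) * (E + D) + |lam / 2| * (E + D) ^ 2 with hB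
      have hev := hL ((f z).toReal + 1 + B + 1) (by rw [htop]; exact EReal.coe_lt_top _)
      obtain ⟨k, hk1, hk2⟩ := (hev.and (hφψ.tendsto_atTop.eventually (hlim 1 one_pos))).exists
      have h1 := subdiff_le (hF _) (hp (φ (ψ k))) hk1.le hk2
      have h2 : ‖zh (φ (ψ k)) - y (φ (ψ k))‖ ≤ E + D :=
        (norm_sub_le _ _).trans (add_le_add (hE' _) (hD _))
      have h3 := abs_real_inner_le_norm (p (φ (ψ k))) (zh (φ (ψ k)) - y (φ (ψ k)))
      have h4 : ‖p (φ (ψ k))‖ * ‖zh (φ (ψ k)) - y (φ (ψ k))‖ ≤ 1 / τ * (‖x‖ + D) * (E + D) :=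
        mul_le_mul (hpD _) h2 (norm_nonneg _) ((norm_nonneg _).trans (hpD 0))
      have h5 : |lam / 2| * ‖zh (φ (ψ k)) - y (φ (ψ k))‖ ^ 2 ≤ |lam / 2| * (E + D) ^ 2 :=
        mul_le_mul_of_nonneg_left (pow_le_pow_left₀ (norm_nonneg _) h2 2) (abs_nonneg _)
      have h6 : -(|lam / 2| * ‖zh (φ (ψ k)) - y (φ (ψ k))‖ ^ 2) ≤
          lam / 2 * ‖zh (φ (ψ k)) - y (φ (ψ k))‖ ^ 2 := by
        rw [← neg_mul]
        exact mul_le_mul_of_nonneg_right (neg_abs_le _) (by positivity)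
      have h7 := (abs_le.1 (h3.trans h4)).1
      linarith
    have hy0 := (EReal.coe_toReal hfin (hf.2 y0)).symm
    obtain ⟨zh, hzh, hlim⟩ := mosco_limsup hM y0 _ hy0
    have hz2 : Tendsto (fun k => zh (φ (ψ k))) atTop (𝓝 y0) := hzh.comp hφψ.tendsto_atTop
    set w : ℕ → H := fun k => zh (φ (ψ k)) - y (φ (ψ k)) with hwdef
    have hcpos : 0 < 1 / τ + lam / 2 := by
      have h1 : (1 + lam * τ) / τ = 1 / τ + lam := by field_simp
      have h2 : 0 < 1 / τ + lam := by rw [← h1]; positivity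
      have h3 : 0 < 1 / τ := by positivity
      linarith
    have hwq : Tendsto (fun k => 1 / τ * ⟪x - zh (φ (ψ k)), w k⟫) atTop (𝓝 0) := by
      have hww : ∀ r : H, Tendsto (fun k => ⟪w k, r⟫) atTop (𝓝 ⟪(0 : H), r⟫) := by
        intro r
        have := (hz2.inner (tendsto_const_nhds (x := r))).sub (hw r)
        rw [sub_self] at this
        rw [inner_zero_left]
        refine this.congr fun k => ?_
        rw [hwdef]; simp only; rw [inner_sub_left]
      obtain ⟨E, hE⟩ := (hz2.norm).bddAbove_range
      have hwb : ∀ k, ‖w k‖ ≤ E + D := fun k =>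
        (norm_sub_le _ _).trans (add_le_add (hE ⟨k, rfl⟩) (hD _))
      have h1 := weak_strong hwb hww (hz2.const_sub x)
      rw [inner_zero_left] at h1
      have h2 := h1.const_mul (1 / τ)
      rw [mul_zero] at h2
      refine h2.congr fun k => ?_
      rw [real_inner_comm]
    have hw0 : Tendsto w atTop (𝓝 0) := by
      rw [Metric.tendsto_atTop']
      intro ε hε
      set e := (1 / τ + lam / 2) * ε ^ 2 / 4 with he
      have hepos : 0 < e := by positivity
      have h1 := hL ((f y0).toReal - e) (by
        rw [hy0]
        simp only [EReal.toReal_coe]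
        exact_mod_cast sub_lt_self _ hepos)
      have h2 := hφψ.tendsto_atTop.eventually (hlim e hepos)
      have h3 := hwq.eventually (lt_mem_nhds (show -e < (0 : ℝ) by linarith))
      obtain ⟨N, hN⟩ := eventually_atTop.1 (h1.and (h2.and h3))
      refine ⟨N, fun k hk => ?_⟩
      obtain ⟨k1, k2, k3⟩ := hN k hk.le
      have h4 := subdiff_le (hF _) (hp (φ (ψ k))) k1.le k2
      have h5 : ⟪p (φ (ψ k)), zh (φ (ψ k)) - y (φ (ψ k))⟫ =
          1 / τ * ⟪x - zh (φ (ψ k)), w k⟫ + 1 / τ * ‖w k‖ ^ 2 := by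
        rw [hpe, real_inner_smul_left, ← mul_add, ← real_inner_self_eq_norm_sq, ← inner_add_left]
        congr 2
        rw [hwdef]; simp only; abel
      rw [h5] at h4
      have h6 : ‖zh (φ (ψ k)) - y (φ (ψ k))‖ = ‖w k‖ := rfl
      rw [h6] at h4
      have h7 : (1 / τ + lam / 2) * ‖w k‖ ^ 2 < (1 / τ + lam / 2) * ε ^ 2 := by
        have : (1 / τ + lam / 2) * ε ^ 2 = 4 * e := by rw [he]; ring
        rw [this, add_mul]
        linarith
      have h8 := lt_of_mul_lt_mul_left h7 hcpos.le
      rw [dist_zero_right]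
      exact lt_of_pow_lt_pow_left₀ 2 hε.le h8
    have hystrong : Tendsto (fun k => y (φ (ψ k))) atTop (𝓝 y0) := by
      have := hz2.sub hw0
      rw [sub_zero] at this
      refine this.congr fun k => ?_
      rw [hwdef]; simp only; abel
    refine ⟨?_, hystrong⟩
    have hpl : Tendsto (fun k => p (φ (ψ k))) atTop (𝓝 ((1 / τ) • (x - y0))) := by
      simp_rw [hpe]
      exact (hystrong.const_sub x).const_smul _
    refine subdiff_closed (F := fun k => fh (φ (ψ k))) (fun k => hF _) hf
      (x := fun k => y (φ (ψ k))) (p := fun k => p (φ (ψ k))) hL ?_ hystrong (fun n => hpD _)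
      (fun r => hpl.inner tendsto_const_nhds) (fun k => hp _)
    intro z a hz
    obtain ⟨zh, h1, h2⟩ := mosco_limsup hM z a hz
    exact ⟨fun k => zh (φ (ψ k)), h1.comp hφψ.tendsto_atTop,
      fun ε hε => hφψ.tendsto_atTop.eventually (h2 ε hε)⟩
  have hres : ∀ y0 : H, y0 + τ • ((1 / τ) • (x - y0)) = x := by
    intro y0
    rw [smul_smul, mul_one_div_cancel hτ.ne', one_smul]; abel
  obtain ⟨ψ0, y0, _, hy0, _⟩ := hsub id strictMono_id
  refine ⟨y0, _, hy0, hres y0, ?_⟩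
  refine tendsto_of_subseq_tendsto fun ns hns => ?_
  obtain ⟨θ, _, hθ⟩ := strictMono_subseq_of_tendsto_atTop hns
  obtain ⟨ψ, y1, hψ, hy1, hlim⟩ := hsub (fun k => ns (θ k)) hθ
  have heq : y1 = y0 := by
    have h1 := res_contr hf.2 hτ.le hy1 hy0
    rw [hres, hres, sub_self, norm_zero] at h1
    have h2 : ‖y1 - y0‖ ≤ 0 := by
      by_contra h
      push Not at h
      exact absurd h1 (not_le.2 (mul_pos hlt h))
    exact sub_eq_zero.1 (norm_le_zero_iff.1 h2)
  rw [heq] at hlim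
  exact ⟨fun k => θ (ψ k), hlim⟩

lemma nested_convex {E : Type*} [NormedAddCommGroup E] [InnerProductSpace ℝ E] [CompleteSpace E]
    (K : ℕ → Set E) (hanti : Antitone K) (hcl : ∀ n, IsClosed (K n)) (hcv : ∀ n, Convex ℝ (K n))
    (hne : ∀ n, (K n).Nonempty) (C : ℝ) (hC : ∀ x ∈ K 0, ‖x‖ ≤ C) : ∃ x, ∀ n, x ∈ K n := by
  have hex : ∀ n, ∃ p ∈ K n, ∀ q ∈ K n, ‖p‖ ≤ ‖q‖ := by
    intro n
    obtain ⟨p, hp, hmin⟩ :=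
      exists_norm_eq_iInf_of_complete_convex (hne n) (hcl n).isComplete (hcv n) 0
    refine ⟨p, hp, fun q hq => ?_⟩
    have hle : (⨅ w : K n, ‖(0 : E) - w‖) ≤ ‖(0 : E) - q‖ :=
      ciInf_le ⟨0, by rintro _ ⟨w, rfl⟩; exact norm_nonneg _⟩ (⟨q, hq⟩ : K n)
    rw [← hmin] at hle
    simpa using hle
  choose p hp hmin using hex
  have hmono : Monotone (fun n => ‖p n‖ ^ 2) := by
    intro n k hnk
    exact pow_le_pow_left₀ (norm_nonneg _) (hmin n _ (hanti hnk (hp k))) 2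
  have hbdd : BddAbove (range fun n => ‖p n‖ ^ 2) := by
    refine ⟨C ^ 2, ?_⟩
    rintro _ ⟨n, rfl⟩
    exact pow_le_pow_left₀ (norm_nonneg _) (hC _ (hanti (Nat.zero_le n) (hp n))) 2
  have hlim := tendsto_atTop_ciSup hmono hbdd
  have hkey : ∀ n k, n ≤ k → ‖p k - p n‖ ^ 2 ≤ 2 * (‖p k‖ ^ 2 - ‖p n‖ ^ 2) := by
    intro n k hnk
    have h1 : (1 / 2 : ℝ) • p k + (1 / 2 : ℝ) • p n ∈ K n :=
      hcv n (hanti hnk (hp k)) (hp n) (by norm_num) (by norm_num) (by norm_num)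
    have h2 := hmin n _ h1
    rw [← smul_add, norm_smul, Real.norm_of_nonneg (by norm_num)] at h2
    have h3 := parallelogram_law_with_norm ℝ (p k) (p n)
    have h4 : (2 * ‖p n‖) ^ 2 ≤ ‖p k + p n‖ ^ 2 :=
      pow_le_pow_left₀ (by positivity) (by linarith) 2
    nlinarith
  have hcau : CauchySeq p := by
    rw [Metric.cauchySeq_iff']
    intro ε hε
    obtain ⟨N, hN⟩ := Metric.cauchySeq_iff'.1 hlim.cauchySeq (ε ^ 2 / 2) (by positivity)
    refine ⟨N, fun n hn => ?_⟩
    have h1 := hN n hn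
    rw [Real.dist_eq] at h1
    have h2 := (abs_lt.1 h1).2
    have h3 := hkey N n hn
    rw [dist_eq_norm]
    exact lt_of_pow_lt_pow_left₀ 2 hε.le (by linarith)
  obtain ⟨x, hx⟩ := cauchySeq_tendsto_of_complete hcau
  refine ⟨x, fun n => (hcl n).mem_of_tendsto hx ?_⟩
  filter_upwards [eventually_ge_atTop n] with k hk using hanti hk (hp k)

lemma eLpNorm_two_sq (u : ℝ → H) (μ : Measure ℝ) :
    ∫⁻ t, ‖u t‖ₑ ^ 2 ∂μ = (eLpNorm u 2 μ) ^ 2 := by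
  rw [eLpNorm_eq_lintegral_rpow_enorm_toReal (by norm_num) (by norm_num)]
  simp only [ENNReal.toReal_ofNat]
  rw [← ENNReal.rpow_natCast, ← ENNReal.rpow_mul]
  norm_num

lemma l2_limit (c : ℝ → H) (C : ℝ≥0∞) (hC : C ≠ ⊤)
    (h : ∀ ε : ℝ, 0 < ε → ∃ u : ℝ → H, AEStronglyMeasurable u (volume.restrict (Ioc 0 1)) ∧
      ∫⁻ t in Ioc 0 1, ‖u t‖ₑ ^ 2 ≤ C ∧ ∀ t ∈ Icc (0 : ℝ) 1, ‖(∫ s in 0..t, u s) - c t‖ ≤ ε) :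
    ∃ u : ℝ → H, AEStronglyMeasurable u (volume.restrict (Ioc 0 1)) ∧
      ∫⁻ t in Ioc 0 1, ‖u t‖ₑ ^ 2 ≤ C ∧ IntegrableOn u (Icc 0 1) ∧
      ∀ t ∈ Icc (0 : ℝ) 1, (∫ s in 0..t, u s) = c t := by
  set μ : Measure ℝ := volume.restrict (Ioc 0 1) with hμ
  set R : ℝ≥0∞ := C ^ (1 / 2 : ℝ) with hR
  have hRt : R ≠ ⊤ := ENNReal.rpow_ne_top_of_nonneg (by norm_num) hC
  have hR2 : R ^ 2 = C := by
    rw [hR, ← ENNReal.rpow_natCast, ← ENNReal.rpow_mul]; norm_num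
  have hiff : ∀ u : ℝ → H, ∫⁻ t, ‖u t‖ₑ ^ 2 ∂μ ≤ C ↔ eLpNorm u 2 μ ≤ R := by
    intro u
    rw [eLpNorm_two_sq, ← hR2]
    exact (ENNReal.pow_right_strictMono two_ne_zero).le_iff_le
  have hset : ∀ t ∈ Icc (0 : ℝ) 1, ∀ u : ℝ → H, ∫ s in 0..t, u s = ∫ s in Ioc 0 t, u s ∂μ := by
    intro t ht u
    rw [intervalIntegral.integral_of_le ht.1, hμ, Measure.restrict_restrict measurableSet_Ioc,
      inter_eq_left.2 (Ioc_subset_Ioc_right ht.2)]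
  let K : ℕ → Set (Lp H 2 μ) := fun n => Metric.closedBall 0 R.toReal ∩
    ⋂ (t ∈ Icc (0 : ℝ) 1) (v : H), {U | ⟪indicatorConstLp 2 (measurableSet_Ioc (a := 0) (b := t))
      (measure_ne_top μ _) v, U⟫ ≤ ⟪v, c t⟫ + 1 / ((n : ℝ) + 1) * ‖v‖}
  have hKmem : ∀ n U, U ∈ K n ↔ ‖U‖ ≤ R.toReal ∧ ∀ t ∈ Icc (0 : ℝ) 1, ∀ v : H,
      ⟪v, (∫ s in Ioc 0 t, U s ∂μ)⟫ ≤ ⟪v, c t⟫ + 1 / ((n : ℝ) + 1) * ‖v‖ := by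
    intro n U
    simp only [K, mem_inter_iff, mem_iInter, mem_ofPred_eq, mem_closedBall_zero_iff,
      L2.inner_indicatorConstLp_eq_inner_setIntegral]
  have hex : ∃ U, ∀ n, U ∈ K n := by
    refine nested_convex K ?_ ?_ ?_ ?_ R.toReal ?_
    · intro n k hnk U hUk
      rw [hKmem] at hUk ⊢
      refine ⟨hUk.1, fun t ht v => (hUk.2 t ht v).trans ?_⟩
      have : 1 / ((k : ℝ) + 1) ≤ 1 / ((n : ℝ) + 1) := by
        apply one_div_le_one_div_of_le (by positivity)
        have : (n : ℝ) ≤ k := by exact_mod_cast hnk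
        linarith
      have := mul_le_mul_of_nonneg_right this (norm_nonneg v)
      linarith
    · intro n
      refine Metric.isClosed_closedBall.inter ?_
      refine isClosed_iInter fun t => isClosed_iInter fun ht => isClosed_iInter fun v => ?_
      exact isClosed_le (continuous_const.inner continuous_id) continuous_const
    · intro n
      refine (convex_closedBall _ _).inter ?_
      refine convex_iInter fun t => convex_iInter fun ht => convex_iInter fun v => ?_
      intro U hU V hV a b ha hb hab
      simp only [mem_ofPred_eq] at hU hV ⊢
      rw [inner_add_right, inner_smul_right, inner_smul_right]
      have hb' : b = 1 - a := by linarith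
      subst hb'
      nlinarith [mul_le_mul_of_nonneg_left hU ha, mul_le_mul_of_nonneg_left hV hb]
    · intro n
      obtain ⟨u, hum, huC, hu⟩ := h (1 / ((n : ℝ) + 1)) (by positivity)
      have huR := (hiff u).1 huC
      have humem : MemLp u 2 μ := ⟨hum, lt_of_le_of_lt huR hRt.lt_top⟩
      refine ⟨humem.toLp u, (hKmem _ _).2 ⟨?_, fun t ht v => ?_⟩⟩
      · rw [Lp.norm_toLp]
        exact ENNReal.toReal_mono hRt huR
      · have h1 : ∫ s in Ioc 0 t, (humem.toLp u) s ∂μ = ∫ s in Ioc 0 t, u s ∂μ :=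
          integral_congr_ae (ae_restrict_of_ae humem.coeFn_toLp)
        rw [h1, ← hset t ht]
        have h2 := real_inner_le_norm v ((∫ s in 0..t, u s) - c t)
        have h3 := mul_le_mul_of_nonneg_left (hu t ht) (norm_nonneg v)
        rw [inner_sub_right] at h2
        linarith
    · intro U hU0
      exact ((hKmem 0 U).1 hU0).1
  obtain ⟨U, hU⟩ := hex
  have hUn : ∫⁻ t, ‖U t‖ₑ ^ 2 ∂μ ≤ C := by
    rw [hiff]
    have h1 := ((hKmem 0 U).1 (hU 0)).1
    rw [Lp.norm_def] at h1
    exact (ENNReal.toReal_le_toReal (Lp.eLpNorm_ne_top U) hRt).1 h1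
  refine ⟨U, Lp.aestronglyMeasurable U, hUn, ?_, ?_⟩
  · rw [integrableOn_Icc_iff_integrableOn_Ioc]
    exact (Lp.memLp U).integrable (by norm_num)
  · intro t ht
    rw [hset t ht]
    have h1 : ∀ v : H, ⟪v, (∫ s in Ioc 0 t, U s ∂μ) - c t⟫ ≤ 0 := by
      intro v
      have h2 : Tendsto (fun n : ℕ => 1 / ((n : ℝ) + 1) * ‖v‖) atTop (𝓝 (0 * ‖v‖)) :=
        tendsto_one_div_add_atTop_nhds_zero_nat.mul_const _
      rw [zero_mul] at h2
      refine ge_of_tendsto h2 (Eventually.of_forall fun n => ?_)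
      have := ((hKmem n U).1 (hU n)).2 t ht v
      rw [inner_sub_right]
      linarith
    have h2 := h1 ((∫ s in Ioc 0 t, U s ∂μ) - c t)
    rw [real_inner_self_eq_norm_sq] at h2
    have h3 : ‖(∫ s in Ioc 0 t, U s ∂μ) - c t‖ = 0 := by
      have := sq_nonneg ‖(∫ s in Ioc 0 t, U s ∂μ) - c t‖
      exact pow_eq_zero_iff (two_ne_zero) |>.1 (le_antisymm h2 this)
    exact sub_eq_zero.1 (norm_eq_zero.1 h3)

lemma lintegral_sq_le (m : ℝ → ℝ≥0∞) (hm : Measurable m) (A : Set ℝ) :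
    (∫⁻ s in A, m s) ^ 2 ≤ volume A * ∫⁻ s in A, m s ^ 2 := by
  have h := ENNReal.lintegral_mul_le_Lp_mul_Lq (volume.restrict A) Real.HolderConjugate.two_two
    hm.aemeasurable (aemeasurable_const (b := (1 : ℝ≥0∞)))
  simp only [Pi.mul_apply, mul_one, ENNReal.one_rpow, lintegral_const, Measure.restrict_apply,
    MeasurableSet.univ, univ_inter, one_mul] at h
  calc (∫⁻ s in A, m s) ^ 2 ≤ ((∫⁻ s in A, m s ^ (2 : ℝ)) ^ (1 / (2 : ℝ)) *
        volume A ^ (1 / (2 : ℝ))) ^ 2 := by gcongr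
    _ = volume A * ∫⁻ s in A, m s ^ 2 := by
        rw [mul_pow, ← ENNReal.rpow_natCast, ← ENNReal.rpow_natCast, ← ENNReal.rpow_mul,
          ← ENNReal.rpow_mul]
        norm_num
        rw [mul_comm]

lemma deriv_unique {g g' : ℝ → H} (hg : IntegrableOn g (Icc 0 1)) (hg' : IntegrableOn g' (Icc 0 1))
    (h : ∀ t ∈ Icc (0 : ℝ) 1, ∫ s in 0..t, g s = ∫ s in 0..t, g' s) :
    g =ᵐ[volume.restrict (Ioc 0 1)] g' := by
  have i1 : IntervalIntegrable g volume 0 1 :=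
    (intervalIntegrable_iff_integrableOn_Icc_of_le zero_le_one).2 hg
  have i2 : IntervalIntegrable g' volume 0 1 :=
    (intervalIntegrable_iff_integrableOn_Icc_of_le zero_le_one).2 hg'
  refine (ae_restrict_iff' measurableSet_Ioc).2 ?_
  have hne : ∀ᵐ x : ℝ, x ≠ 1 := by simp [ae_iff, measure_singleton]
  filter_upwards [i1.ae_hasDerivAt_integral, i2.ae_hasDerivAt_integral, hne] with x h1 h2 h3 hx
  have hxI : x ∈ uIcc (0 : ℝ) 1 := by rw [uIcc_of_le zero_le_one]; exact ⟨hx.1.le, hx.2⟩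
  have h0I : (0 : ℝ) ∈ uIcc (0 : ℝ) 1 := by rw [uIcc_of_le zero_le_one]; simp
  have d1 := h1 hxI 0 h0I
  have d2 := h2 hxI 0 h0I
  refine d1.unique (d2.congr_of_eventuallyEq ?_)
  have : Ioo (0 : ℝ) 1 ∈ 𝓝 x := Ioo_mem_nhds hx.1 (lt_of_le_of_ne hx.2 h3)
  filter_upwards [this] with t ht
  exact h t ⟨ht.1.le, ht.2.le⟩

lemma action_eq {lam : ℝ} {f : H → EReal} {γ g : ℝ → H} (hg : IntegrableOn g (Icc 0 1))
    (h : ∀ t ∈ Icc (0 : ℝ) 1, γ t = γ 0 + ∫ s in 0..t, g s) :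
    actionFn lam f 0 1 γ =
      (∫⁻ t in Ioc 0 1, ‖g t‖ₑ ^ 2) + ∫⁻ t in Ioc 0 1, gradNorm lam f (γ t) ^ 2 := by
  have hAC : IsACCurve 0 1 γ := ⟨g, hg, h⟩
  unfold actionFn
  rw [dif_pos hAC]
  have hu : hAC.choose =ᵐ[volume.restrict (Ioc 0 1)] g := by
    refine deriv_unique hAC.choose_spec.1 hg fun t ht => ?_
    have h1 := hAC.choose_spec.2 t ht
    rw [h t ht] at h1
    exact (add_left_cancel h1).symm
  have hm : AEMeasurable (fun t => ‖g t‖ₑ ^ 2) (volume.restrict (Ioc 0 1)) :=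
    ((hg.mono_set Ioc_subset_Icc_self).aestronglyMeasurable.enorm).pow_const 2
  rw [← lintegral_add_left' hm]
  refine lintegral_congr_ae ?_
  filter_upwards [hu] with t ht
  rw [ht, ENNReal.ofReal_pow (norm_nonneg _), ofReal_norm]

lemma velocity_of_bound (η : ℝ → H) (m : ℝ → ℝ≥0∞) (hm : Measurable m)
    (hfin : ∫⁻ t, m t ^ 2 ≠ ⊤)
    (hη : ∀ s t : ℝ, s ≤ t → ‖η t - η s‖ₑ ≤ ∫⁻ r in Ioc s t, m r) :
    ∃ u : ℝ → H, ∫⁻ t in Ioc 0 1, ‖u t‖ₑ ^ 2 ≤ ∫⁻ t, m t ^ 2 ∧ IntegrableOn u (Icc 0 1) ∧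
      ∀ t ∈ Icc (0 : ℝ) 1, η t = η 0 + ∫ s in 0..t, u s := by
  set M := ∫⁻ t, m t ^ 2 with hM
  have hsq : ∀ s t : ℝ, s ≤ t → ‖η t - η s‖ₑ ^ 2 ≤
      ENNReal.ofReal (t - s) * ∫⁻ r in Ioc s t, m r ^ 2 := by
    intro s t hst
    have h1 := lintegral_sq_le m hm (Ioc s t)
    rw [Real.volume_Ioc] at h1
    exact (pow_le_pow_left' (hη s t hst) 2).trans h1
  have hreal : ∀ s t : ℝ, s ≤ t → ‖η t - η s‖ ^ 2 ≤ (t - s) * M.toReal := by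
    intro s t hst
    have h1 : ‖η t - η s‖ₑ ^ 2 ≤ ENNReal.ofReal (t - s) * M :=
      (hsq s t hst).trans (by gcongr; exact setLIntegral_le_lintegral _ _)
    have h2 := ENNReal.toReal_mono (ENNReal.mul_ne_top ENNReal.ofReal_ne_top hfin) h1
    rwa [ENNReal.toReal_mul, ENNReal.toReal_ofReal (sub_nonneg.2 hst), ENNReal.toReal_pow,
      toReal_enorm] at h2
  have hunif : ∀ ε : ℝ, 0 < ε → ∃ d : ℝ, 0 < d ∧ ∀ s t, s ≤ t → t ≤ s + d → ‖η t - η s‖ ≤ ε := by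
    intro ε hε
    have hM0 : 0 ≤ M.toReal := ENNReal.toReal_nonneg
    refine ⟨ε ^ 2 / (M.toReal + 1), by positivity, fun s t hst htd => ?_⟩
    refine le_of_sq_le_sq ?_ hε.le
    refine (hreal s t hst).trans ?_
    have h1 : (t - s) * M.toReal ≤ ε ^ 2 / (M.toReal + 1) * (M.toReal + 1) :=
      mul_le_mul (by linarith) (by linarith) hM0 (by positivity)
    rwa [div_mul_cancel₀ _ (by positivity)] at h1
  have hcont : Continuous η := by
    rw [Metric.continuous_iff]
    intro t ε hε
    obtain ⟨d, hd, h⟩ := hunif (ε / 2) (by positivity)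
    refine ⟨d, hd, fun s hs => ?_⟩
    rw [Real.dist_eq, abs_lt] at hs
    rw [dist_eq_norm]
    rcases le_total s t with hst | hst
    · rw [norm_sub_rev]
      exact (h s t hst (by linarith)).trans_lt (by linarith)
    · exact (h t s hst (by linarith)).trans_lt (by linarith)
  suffices hs : _ by
    obtain ⟨u, _, hu2, hu3, hu4⟩ := l2_limit (fun t => η t - η 0) M hfin hs
    refine ⟨u, hu2, hu3, fun t ht => ?_⟩
    rw [hu4 t ht]; abel
  intro ε hε
  obtain ⟨d, hd, hdε⟩ := hunif (ε / 2) (by positivity)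
  have hucont : Continuous (fun t => d⁻¹ • (η (t + d) - η t)) := by fun_prop
  refine ⟨fun t => d⁻¹ • (η (t + d) - η t), hucont.aestronglyMeasurable, ?_, ?_⟩
  · have hpt : ∀ t, ‖d⁻¹ • (η (t + d) - η t)‖ₑ ^ 2 ≤
        ENNReal.ofReal d⁻¹ * ∫⁻ r, (Ioc t (t + d)).indicator (fun r => m r ^ 2) r := by
      intro t
      rw [lintegral_indicator measurableSet_Ioc, enorm_smul, mul_pow]
      have h1 := hsq t (t + d) (by linarith)
      rw [add_sub_cancel_left] at h1
      have h2 : ‖d⁻¹‖ₑ = ENNReal.ofReal d⁻¹ := Real.enorm_of_nonneg (by positivity)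
      rw [h2]
      calc _ ≤ ENNReal.ofReal d⁻¹ ^ 2 * (ENNReal.ofReal d * ∫⁻ r in Ioc t (t + d), m r ^ 2) := by
            gcongr
        _ = ENNReal.ofReal d⁻¹ * (ENNReal.ofReal d⁻¹ * ENNReal.ofReal d) *
            ∫⁻ r in Ioc t (t + d), m r ^ 2 := by ring
        _ = _ := by
            rw [← ENNReal.ofReal_mul (by positivity), inv_mul_cancel₀ hd.ne', ENNReal.ofReal_one,
              mul_one]
    calc _ ≤ ∫⁻ t in Ioc 0 1, ENNReal.ofReal d⁻¹ *
            ∫⁻ r, (Ioc t (t + d)).indicator (fun r => m r ^ 2) r := lintegral_mono hpt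
      _ ≤ ∫⁻ t, ENNReal.ofReal d⁻¹ *
            ∫⁻ r, (Ioc t (t + d)).indicator (fun r => m r ^ 2) r := setLIntegral_le_lintegral _ _
      _ = ENNReal.ofReal d⁻¹ * ∫⁻ t, ∫⁻ r, (Ioc t (t + d)).indicator (fun r => m r ^ 2) r := by
          rw [lintegral_const_mul' _ _ ENNReal.ofReal_ne_top]
      _ = ENNReal.ofReal d⁻¹ * ∫⁻ r, ∫⁻ t, (Ioc t (t + d)).indicator (fun r => m r ^ 2) r := by
          congr 1
          refine lintegral_lintegral_swap ?_
          have hset : MeasurableSet {q : ℝ × ℝ | q.1 < q.2 ∧ q.2 ≤ q.1 + d} :=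
            (measurableSet_lt measurable_fst measurable_snd).inter
              (measurableSet_le measurable_snd (measurable_fst.add_const d))
          have : (Function.uncurry fun t r => (Ioc t (t + d)).indicator (fun r => m r ^ 2) r) =
              {q : ℝ × ℝ | q.1 < q.2 ∧ q.2 ≤ q.1 + d}.indicator (fun q => m q.2 ^ 2) := by
            ext ⟨t, r⟩
            simp only [Function.uncurry_apply_pair, indicator, mem_Ioc, mem_ofPred_eq]
          rw [this]
          exact (((hm.comp measurable_snd).pow_const 2).indicator hset).aemeasurable
      _ = ENNReal.ofReal d⁻¹ * ∫⁻ r, ENNReal.ofReal d * m r ^ 2 := by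
          congr 1
          refine lintegral_congr fun r => ?_
          have : ∀ t, (Ioc t (t + d)).indicator (fun r => m r ^ 2) r =
              (Ico (r - d) r).indicator (fun _ => m r ^ 2) t := by
            intro t
            simp only [indicator, mem_Ioc, mem_Ico]
            congr 1
            exact propext ⟨fun h => ⟨by linarith [h.2], h.1⟩, fun h => ⟨h.2, by linarith [h.1]⟩⟩
          simp_rw [this]
          rw [lintegral_indicator measurableSet_Ico, setLIntegral_const, Real.volume_Ico, mul_comm]
          congr 2
          ring
      _ = M := by
          rw [lintegral_const_mul' _ _ ENNReal.ofReal_ne_top, ← mul_assoc,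
            ← ENNReal.ofReal_mul (by positivity), inv_mul_cancel₀ hd.ne', ENNReal.ofReal_one,
            one_mul]
  · intro t ht
    have hii : ∀ a b, IntervalIntegrable η volume a b := fun a b => hcont.intervalIntegrable a b
    have hii' : ∀ a b, IntervalIntegrable (fun s => η (s + d)) volume a b :=
      fun a b => (show Continuous fun s => η (s + d) by fun_prop).intervalIntegrable a b
    have hint : (∫ s in 0..t, d⁻¹ • (η (s + d) - η s)) =
        d⁻¹ • ((∫ s in t..(t + d), η s) - ∫ s in 0..(0 + d), η s) := by
      rw [intervalIntegral.integral_smul, intervalIntegral.integral_sub (hii' _ _) (hii _ _),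
        intervalIntegral.integral_comp_add_right]
      congr 1
      have e1 := intervalIntegral.integral_add_adjacent_intervals (hii 0 (0 + d)) (hii (0 + d) (t + d))
      have e2 := intervalIntegral.integral_add_adjacent_intervals (hii 0 t) (hii t (t + d))
      rw [← e2] at e1
      rw [sub_eq_sub_iff_add_eq_add, add_comm, e1, add_comm]
    have hav : ∀ a : ℝ, ‖d⁻¹ • (∫ s in a..(a + d), η s) - η a‖ ≤ ε / 2 := by
      intro a
      have e1 : d⁻¹ • (∫ s in a..(a + d), η s) - η a = d⁻¹ • ∫ s in a..(a + d), (η s - η a) := by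
        rw [intervalIntegral.integral_sub (hii _ _) (by simp), intervalIntegral.integral_const,
          add_sub_cancel_left, smul_sub, smul_smul, inv_mul_cancel₀ hd.ne', one_smul]
      rw [e1, norm_smul, Real.norm_of_nonneg (by positivity)]
      have e2 : ‖∫ s in a..(a + d), (η s - η a)‖ ≤ ε / 2 * |a + d - a| := by
        refine intervalIntegral.norm_integral_le_of_norm_le_const fun s hs => ?_
        rw [uIoc_of_le (by linarith)] at hs
        exact hdε a s hs.1.le hs.2
      rw [add_sub_cancel_left, abs_of_pos hd] at e2
      calc d⁻¹ * _ ≤ d⁻¹ * (ε / 2 * d) := by gcongr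
        _ = ε / 2 := by field_simp
    rw [hint]
    have e3 : d⁻¹ • ((∫ s in t..(t + d), η s) - ∫ s in 0..(0 + d), η s) - (η t - η 0) =
        (d⁻¹ • (∫ s in t..(t + d), η s) - η t) - (d⁻¹ • (∫ s in 0..(0 + d), η s) - η 0) := by
      rw [smul_sub]; abel
    rw [e3]
    refine (norm_sub_le _ _).trans ?_
    linarith [hav t, hav 0]

lemma gradNorm_meas {lam : ℝ} {f : H → EReal} (hf : ProperFn f) (hl : LowerSemicontinuous f)
    {γ : ℝ → H} (hγ : ContinuousOn γ (Icc 0 1)) :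
    AEMeasurable (fun t => gradNorm lam f (γ t) ^ 2) (volume.restrict (Ioc 0 1)) := by
  have hc : Continuous (IccExtend (zero_le_one' ℝ) ((Icc (0 : ℝ) 1).domRestrict γ)) :=
    (continuousOn_iff_continuous_domRestrict.1 hγ).Icc_extend'
  have h1 : LowerSemicontinuous fun t =>
      gradNorm lam f (IccExtend (zero_le_one' ℝ) ((Icc (0 : ℝ) 1).domRestrict γ) t) :=
    (gradNorm_lsc (lam := lam) hf hl).comp hc
  refine (h1.measurable.pow_const 2).aemeasurable.congr ?_
  filter_upwards [ae_restrict_mem measurableSet_Ioc] with t ht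
  rw [IccExtend_of_mem _ _ (Ioc_subset_Icc_self ht)]
  rfl

lemma ennreal_liminf_sq (u : ℕ → ℝ≥0∞) :
    liminf u atTop ^ 2 = liminf (fun k => u k ^ 2) atTop := by
  have hm : Monotone (fun x : ℝ≥0∞ => x ^ 2) := fun a b h => pow_le_pow_left' h 2
  have := hm.map_liminf_of_continuousAt (F := atTop) u
    ((ENNReal.continuous_pow 2).continuousAt)
  exact this

lemma weak_of_strong {y : ℕ → H} {y0 : H} (h : Tendsto y atTop (𝓝 y0)) (p : H) :
    Tendsto (fun k => ⟪y k, p⟫) atTop (𝓝 ⟪y0, p⟫) :=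
  h.inner tendsto_const_nhds

lemma theta_data {lam : ℝ} {f : H → EReal} {x0 x1 : H} {γ : ℝ → H}
    (h : Theta lam f x0 x1 γ ≠ ⊤) : γ 0 = x0 ∧ γ 1 = x1 ∧ ∃ g : ℝ → H,
      IntegrableOn g (Icc 0 1) ∧ (∀ t ∈ Icc (0 : ℝ) 1, γ t = γ 0 + ∫ s in 0..t, g s) ∧
      Theta lam f x0 x1 γ =
        (∫⁻ t in Ioc 0 1, ‖g t‖ₑ ^ 2) + ∫⁻ t in Ioc 0 1, gradNorm lam f (γ t) ^ 2 := by
  unfold Theta at h ⊢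
  by_cases he : γ 0 = x0 ∧ γ 1 = x1
  · rw [if_pos he] at h ⊢
    by_cases hAC : IsACCurve 0 1 γ
    · obtain ⟨g, hg, hgγ⟩ := hAC
      exact ⟨he.1, he.2, g, hg, hgγ, action_eq hg hgγ⟩
    · unfold actionFn at h
      rw [dif_neg hAC] at h
      exact absurd rfl h
  · rw [if_neg he] at h
    exact absurd rfl h

lemma liminf_part (lam : ℝ) (fh : ℕ → H → EReal) (f : H → EReal)
    (hfh_proper : ∀ h, ProperFn (fh h)) (hfh_lsc : ∀ h, LowerSemicontinuous (fh h))
    (hf_proper : ProperFn f)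
    (hM : Mosco fh f)
    (xh0 xh1 : ℕ → H) (x0 x1 : H)
    (hx0 : Tendsto xh0 atTop (𝓝 x0)) (hx1 : Tendsto xh1 atTop (𝓝 x1))
    (γh : ℕ → ℝ → H) (γ : ℝ → H) (hγh : ∀ h, ContinuousOn (γh h) (Icc 0 1))
    (hu : TendstoUniformlyOn γh γ atTop (Icc 0 1)) :
      Theta lam f x0 x1 γ
        ≤ Filter.liminf (fun h => Theta lam (fh h) (xh0 h) (xh1 h) (γh h)) atTop := by
  by_contra hcon
  rw [not_le] at hcon
  obtain ⟨l, hl1, hl2⟩ := exists_between hcon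
  have hltop : l ≠ ⊤ := ne_top_of_lt hl2
  have hfreq := frequently_lt_of_liminf_lt (by isBoundedDefault) hl1
  obtain ⟨ψ, hψ, hψl⟩ := extraction_of_frequently_atTop hfreq
  have hd : ∀ k, _ := fun k => theta_data (ne_top_of_lt (hψl k))
  choose he0 he1 g0 hg0 hgγ0 hΘ0 using hd
  obtain ⟨⟨A, B⟩, χ, hχ, hAB⟩ := CompactSpace.tendsto_subseq (fun k =>
    ((∫⁻ t in Ioc 0 1, ‖g0 k t‖ₑ ^ 2),
      ∫⁻ t in Ioc 0 1, gradNorm lam (fh (ψ k)) (γh (ψ k) t) ^ 2))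
  set φ : ℕ → ℕ := fun k => ψ (χ k) with hφdef
  have hφ : StrictMono φ := hψ.comp hχ
  have hA : Tendsto (fun k => ∫⁻ t in Ioc 0 1, ‖g0 (χ k) t‖ₑ ^ 2) atTop (𝓝 A) :=
    (continuous_fst.tendsto _).comp hAB
  have hB : Tendsto (fun k => ∫⁻ t in Ioc 0 1, gradNorm lam (fh (φ k)) (γh (φ k) t) ^ 2)
      atTop (𝓝 B) := (continuous_snd.tendsto _).comp hAB
  have hABl : A + B ≤ l := by
    refine le_of_tendsto (hA.add hB) (Eventually.of_forall fun k => ?_)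
    have := (hψl (χ k)).le
    rw [hΘ0] at this
    exact this
  have hAtop : A ≠ ⊤ := ne_top_of_le_ne_top hltop (le_self_add.trans hABl)
  have hpt : ∀ t ∈ Icc (0 : ℝ) 1, Tendsto (fun k => γh (φ k) t) atTop (𝓝 (γ t)) := fun t ht =>
    (hu.tendsto_at ht).comp hφ.tendsto_atTop
  have hγ0 : γ 0 = x0 := by
    refine tendsto_nhds_unique (hpt 0 (by simp)) ?_
    have h1 : (fun k => γh (φ k) 0) = fun k => xh0 (φ k) := funext fun k => he0 (χ k)
    rw [h1]
    exact hx0.comp hφ.tendsto_atTop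
  have hγ1 : γ 1 = x1 := by
    refine tendsto_nhds_unique (hpt 1 (by simp)) ?_
    have h1 : (fun k => γh (φ k) 1) = fun k => xh1 (φ k) := funext fun k => he1 (χ k)
    rw [h1]
    exact hx1.comp hφ.tendsto_atTop
  -- velocity
  have hvel : ∀ A' : ℝ≥0∞, A < A' → A' ≠ ⊤ → ∃ u : ℝ → H,
      ∫⁻ t in Ioc 0 1, ‖u t‖ₑ ^ 2 ≤ A' ∧ IntegrableOn u (Icc 0 1) ∧
      ∀ t ∈ Icc (0 : ℝ) 1, (∫ s in 0..t, u s) = γ t - γ 0 := by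
    intro A' hA' hA't
    obtain ⟨u, _, h1, h2, h3⟩ := l2_limit (fun t => γ t - γ 0) A' hA't (by
      intro ε hε
      have hev1 := hA.eventually_lt_const hA'
      have hev2 := hφ.tendsto_atTop.eventually (Metric.tendstoUniformlyOn_iff.1 hu (ε / 2)
        (by positivity))
      obtain ⟨k, hk1, hk2⟩ := (hev1.and hev2).exists
      refine ⟨g0 (χ k), ((hg0 (χ k)).mono_set Ioc_subset_Icc_self).aestronglyMeasurable,
        hk1.le, fun t ht => ?_⟩
      have h1 := hk2 t ht
      have h2 := hk2 0 (by simp)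
      have h3 : γh (φ k) t = γh (φ k) 0 + ∫ s in 0..t, g0 (χ k) s := hgγ0 (χ k) t ht
      rw [dist_comm, dist_eq_norm] at h1
      rw [dist_eq_norm] at h2
      have h4 : (∫ s in 0..t, g0 (χ k) s) - (γ t - γ 0) =
          (γh (φ k) t - γ t) + (γ 0 - γh (φ k) 0) := by rw [h3]; abel
      rw [h4]
      refine (norm_add_le _ _).trans ?_
      linarith)
    exact ⟨u, h1, h2, h3⟩
  obtain ⟨u, -, hu2, hu3⟩ := hvel (A + 1) (ENNReal.lt_add_right hAtop one_ne_zero)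
    (by simp [hAtop])
  have huA : ∫⁻ t in Ioc 0 1, ‖u t‖ₑ ^ 2 ≤ A := by
    refine le_of_forall_gt_imp_ge_of_dense fun A' hA' => ?_
    rcases eq_or_ne A' ⊤ with rfl | hA't
    · exact le_top
    obtain ⟨v, hv1, hv2, hv3⟩ := hvel A' hA' hA't
    refine le_trans (le_of_eq ?_) hv1
    refine lintegral_congr_ae ?_
    filter_upwards [deriv_unique hu2 hv2 fun t ht => by rw [hu3 t ht, hv3 t ht]] with t ht
    rw [ht]
  -- slope
  have hslope : ∫⁻ t in Ioc 0 1, gradNorm lam f (γ t) ^ 2 ≤ B := by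
    calc ∫⁻ t in Ioc 0 1, gradNorm lam f (γ t) ^ 2
        ≤ ∫⁻ t in Ioc 0 1, liminf (fun k => gradNorm lam (fh (φ k)) (γh (φ k) t) ^ 2) atTop := by
          refine lintegral_mono_ae ?_
          filter_upwards [ae_restrict_mem measurableSet_Ioc] with t ht
          rw [← ennreal_liminf_sq]
          refine pow_le_pow_left' ?_ 2
          have hconv := hpt t (Ioc_subset_Icc_self ht)
          refine gradNorm_liminf (F := fun k => fh (φ k)) (fun k => (hfh_proper (φ k)).2)
            hf_proper (x := fun k => γh (φ k) t) (fun b hb => ?_) (fun z a hz => ?_) hconv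
          · exact mosco_liminf hM hφ (weak_of_strong hconv) b hb
          · obtain ⟨zh, hz1, hz2⟩ := mosco_limsup hM z a hz
            exact ⟨fun k => zh (φ k), hz1.comp hφ.tendsto_atTop, fun ε hε =>
              hφ.tendsto_atTop.eventually (hz2 ε hε)⟩
      _ ≤ liminf (fun k => ∫⁻ t in Ioc 0 1, gradNorm lam (fh (φ k)) (γh (φ k) t) ^ 2) atTop :=
          lintegral_liminf_le' fun k => gradNorm_meas (hfh_proper _) (hfh_lsc _) (hγh _)
      _ = B := hB.liminf_eq
  have hfin : Theta lam f x0 x1 γ ≤ l := by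
    unfold Theta
    rw [if_pos ⟨hγ0, hγ1⟩, action_eq hu2 (fun t ht => by rw [hu3 t ht]; abel)]
    exact (add_le_add huA hslope).trans hABl
  exact absurd hl2 (not_lt.2 hfin)

lemma lintegral_affine (F : ℝ → ℝ≥0∞) {k : ℝ} (hk : 0 < k) (b : ℝ) :
    ∫⁻ t, F (b + k * t) = ENNReal.ofReal k⁻¹ * ∫⁻ u, F u := by
  have h1 : ∫⁻ t, F (b + k * t) = ∫⁻ t, F (b + t) ∂(Measure.map (fun t => k * t) volume) := by
    rw [(measurableEmbedding_mulLeft₀ hk.ne').lintegral_map]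
  rw [h1, Real.map_volume_mul_left hk.ne', lintegral_smul_measure, abs_of_pos (inv_pos.2 hk),
    lintegral_add_left_eq_self (fun t => F t) b]
  rfl

lemma edge_int {m : ℝ → ℝ≥0∞} {C s t s' t' : ℝ} (hC : 0 ≤ C) (hs : s ≤ s') (ht : t' ≤ t)
    (hm : ∀ r ∈ Ioc s' t', ENNReal.ofReal C ≤ m r) :
    ENNReal.ofReal (C * (t' - s')) ≤ ∫⁻ r in Ioc s t, m r := by
  calc ENNReal.ofReal (C * (t' - s')) = ∫⁻ r in Ioc s' t', ENNReal.ofReal C := by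
        rw [setLIntegral_const, Real.volume_Ioc, ENNReal.ofReal_mul hC]
    _ ≤ ∫⁻ r in Ioc s' t', m r := setLIntegral_mono' measurableSet_Ioc hm
    _ ≤ ∫⁻ r in Ioc s t, m r := lintegral_mono_set (Ioc_subset_Ioc hs ht)

lemma three_int {F G : ℝ → ℝ≥0∞} {C : ℝ≥0∞} {δ : ℝ} (hδ : 0 ≤ δ)
    (h1 : ∀ u ∈ Ioc (0 : ℝ) 1, F u ≤ G u)
    (h2 : ∀ u ∈ Ioc (-δ) 0, F u ≤ C) (h3 : ∀ u ∈ Ioc 1 (1 + δ), F u ≤ C)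
    (h4 : ∀ u, u ∉ Ioc (-δ) (1 + δ) → F u = 0) :
    ∫⁻ u, F u ≤ (∫⁻ u in Ioc 0 1, G u) + ENNReal.ofReal (2 * δ) * C := by
  have hpt : ∀ u, F u ≤ (Ioc (0 : ℝ) 1).indicator G u +
      ((Ioc (-δ) 0).indicator (fun _ => C) u + (Ioc 1 (1 + δ)).indicator (fun _ => C) u) := by
    intro u
    by_cases a1 : u ∈ Ioc (0 : ℝ) 1
    · rw [indicator_of_mem a1]
      exact (h1 u a1).trans le_self_add
    by_cases a2 : u ∈ Ioc (-δ) 0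
    · rw [indicator_of_mem a2]
      exact (h2 u a2).trans (le_self_add.trans le_add_self)
    by_cases a3 : u ∈ Ioc 1 (1 + δ)
    · rw [indicator_of_mem a3]
      exact (h3 u a3).trans (le_add_self.trans le_add_self)
    rw [h4 u ?_]
    · exact zero_le
    rintro ⟨b1, b2⟩
    simp only [mem_Ioc, not_and, not_le] at a1 a2 a3
    have c1 := a2 b1
    have c2 := a1 c1
    have c3 := a3 c2
    linarith
  have hm1 : Measurable ((Ioc (-δ) 0).indicator (fun _ : ℝ => C)) :=
    measurable_const.indicator measurableSet_Ioc
  have hm2 : Measurable ((Ioc 1 (1 + δ)).indicator (fun _ : ℝ => C)) :=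
    measurable_const.indicator measurableSet_Ioc
  have hm3 : Measurable fun u => (Ioc (-δ) 0).indicator (fun _ : ℝ => C) u +
      (Ioc 1 (1 + δ)).indicator (fun _ : ℝ => C) u := hm1.add hm2
  refine (lintegral_mono hpt).trans (le_of_eq ?_)
  rw [lintegral_add_right _ hm3, lintegral_add_right _ hm2,
    lintegral_indicator measurableSet_Ioc, lintegral_indicator measurableSet_Ioc,
    lintegral_indicator measurableSet_Ioc, setLIntegral_const, setLIntegral_const,
    Real.volume_Ioc, Real.volume_Ioc, ← mul_add, ← ENNReal.ofReal_add (by linarith) (by linarith),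
    mul_comm C]
  congr 3
  ring

lemma glue_bound {η : ℝ → H} {m : ℝ → ℝ≥0∞} {r : ℝ}
    {P : ℝ → Prop} {Q : ℝ → Prop} (hPr : P r) (hQr : Q r)
    (h1 : ∀ s t, P s → P t → s ≤ t → t ≤ r → ‖η t - η s‖ₑ ≤ ∫⁻ x in Ioc s t, m x)
    (h2 : ∀ s t, Q s → Q t → r ≤ s → s ≤ t → ‖η t - η s‖ₑ ≤ ∫⁻ x in Ioc s t, m x) :
    ∀ s t, (s ≤ r → P s) → (t ≤ r → P t) → (r ≤ s → Q s) → (r ≤ t → Q t) → s ≤ t →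
      ‖η t - η s‖ₑ ≤ ∫⁻ x in Ioc s t, m x := by
  intro s t hs ht hs' ht' hst
  rcases le_total t r with h | h
  · exact h1 s t (hs (hst.trans h)) (ht h) hst h
  rcases le_total r s with h' | h'
  · exact h2 s t (hs' h') (ht' h) h' hst
  have e : η t - η s = (η t - η r) + (η r - η s) := by abel
  rw [e, ← Ioc_union_Ioc_eq_Ioc h' h, lintegral_union measurableSet_Ioc
    (Ioc_disjoint_Ioc_of_le le_rfl), add_comm (∫⁻ x in Ioc s r, m x)]
  exact (enorm_add_le _ _).trans (add_le_add (h2 r t hQr (ht' h) le_rfl h)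
    (h1 s r (hs h') hPr h' le_rfl))

lemma res_param {lam : ℝ} {f : H → EReal} (hf : ∀ x, f x ≠ ⊥) {x y p y' p' : H} {σ τ M κ : ℝ}
    (hσ : 0 ≤ σ) (hκ : 0 < κ) (hκσ : κ ≤ 1 + lam * σ) (hp : p ∈ subdiff lam f y)
    (hp' : p' ∈ subdiff lam f y') (h : y + τ • p = x) (h' : y' + σ • p' = x) (hM : ‖p‖ ≤ M) :
    ‖y - y'‖ ≤ κ⁻¹ * M * |τ - σ| := by
  have h1 := res_contr hf hσ hp hp'
  have h2 : (y + σ • p) - (y' + σ • p') = (σ - τ) • p := by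
    rw [h', ← h, sub_smul]; abel
  rw [h2, norm_smul, Real.norm_eq_abs, abs_sub_comm] at h1
  have h3 : κ * ‖y - y'‖ ≤ M * |τ - σ| := by
    calc κ * ‖y - y'‖ ≤ (1 + lam * σ) * ‖y - y'‖ := by gcongr
      _ ≤ |τ - σ| * ‖p‖ := h1
      _ ≤ |τ - σ| * M := by gcongr
      _ = _ := mul_comm _ _
  rw [mul_assoc, ← div_eq_inv_mul, le_div_iff₀ hκ]
  linarith

lemma edge_full {lam : ℝ} {f : H → EReal} (hf : ∀ x, f x ≠ ⊥) (hc : LambdaConvex lam f)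
    (hl : LowerSemicontinuous f) {c g : ℝ → H} (hg : IntegrableOn g (Icc 0 1))
    (hcg : ∀ t ∈ Icc (0 : ℝ) 1, c t = c 0 + ∫ s in 0..t, g s)
    {q0 q1 : H} (hq0 : q0 ∈ subdiff lam f (c 0)) (hq1 : q1 ∈ subdiff lam f (c 1)) {M : ℝ}
    (hM0 : ‖q0‖ ≤ M) (hM1 : ‖q1‖ ≤ M) {δ : ℝ} (hδ : 0 < δ) (hlam : |lam| * δ ≤ 1 / 2)
    {y p : ℝ → H} (hp : ∀ u ∈ Icc (0 : ℝ) 1, p u ∈ subdiff lam f (y u))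
    (hy : ∀ u ∈ Icc (0 : ℝ) 1, y u + δ • p u = c u) :
    ∃ (Y P : ℝ → H) (m : ℝ → ℝ≥0∞), Measurable m ∧
      (∀ s t, s ≤ t → ‖Y t - Y s‖ₑ ≤ ∫⁻ r in Ioc s t, m r) ∧
      (∫⁻ r, m r ^ 2 ≤ ENNReal.ofReal (((1 - |lam| * δ) ^ 2)⁻¹) * (∫⁻ t in Ioc 0 1, ‖g t‖ₑ ^ 2) +
        ENNReal.ofReal (2 * δ) * ENNReal.ofReal (4 * M) ^ 2) ∧
      (∀ u, P u ∈ subdiff lam f (Y u)) ∧ (∀ u ∈ Icc (0 : ℝ) 1, P u = p u) ∧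
      (∀ u, u ≤ 0 ∨ 1 ≤ u → ‖P u‖ ≤ 2 * M) ∧ Y (-δ) = c 0 ∧ Y (1 + δ) = c 1 ∧
      (∀ u ≤ 0, ‖Y u - c 0‖ ≤ 2 * M * δ) ∧ (∀ u, 1 ≤ u → ‖Y u - c 1‖ ≤ 2 * M * δ) ∧
      (∀ u ∈ Icc (0 : ℝ) 1, ‖Y u - c u‖ ≤ δ * ‖p u‖) := by
  set κ : ℝ := 1 - |lam| * δ with hκdef
  have hκ2 : 1 / 2 ≤ κ := by linarith
  have hκ : 0 < κ := by linarith
  have hκinv : κ⁻¹ ≤ 2 := by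
    rw [inv_le_comm₀ hκ (by norm_num)]; linarith
  have hMnn : 0 ≤ M := (norm_nonneg _).trans hM0
  have hκσ : ∀ σ, 0 ≤ σ → σ ≤ δ → κ ≤ 1 + lam * σ := by
    intro σ h1 h2
    have h3 : |lam * σ| ≤ |lam| * δ := by
      rw [abs_mul, abs_of_nonneg h1]; gcongr
    have := (abs_le.1 h3).1
    linarith
  set τ : ℝ → ℝ := fun u => max 0 (min δ (min (u + δ) (1 + δ - u))) with hτdef
  have hτ0 : ∀ u, 0 ≤ τ u := fun u => le_max_left _ _
  have hτδ : ∀ u, τ u ≤ δ := fun u => max_le hδ.le (min_le_left _ _)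
  have hτ1 : ∀ u ≤ 0, τ u = max 0 (u + δ) := by
    intro u hu
    simp only [τ]
    rw [min_eq_left (by linarith : u + δ ≤ 1 + δ - u), min_eq_right (by linarith : u + δ ≤ δ)]
  have hτ2 : ∀ u ∈ Icc (0 : ℝ) 1, τ u = δ := by
    intro u hu
    simp only [τ]
    rw [min_eq_left (le_min (by linarith [hu.1]) (by linarith [hu.2])), max_eq_right hδ.le]
  have hτ3 : ∀ u, 1 ≤ u → τ u = max 0 (1 + δ - u) := by
    intro u hu
    simp only [τ]
    rw [min_eq_right (by linarith : 1 + δ - u ≤ u + δ), min_eq_right (by linarith : 1 + δ - u ≤ δ)]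
  have hslope : ∀ (x q Y P : H) (σ : ℝ), 0 < σ → σ ≤ δ → q ∈ subdiff lam f x → ‖q‖ ≤ M →
      P ∈ subdiff lam f Y → Y + σ • P = x → ‖P‖ ≤ 2 * M := by
    intro x q Y P σ h1 h2 h3 h4 h5 h6
    rw [← h6] at h3
    have h7 := res_slope hf h1 h5 h3
    have h8 := hκσ σ h1.le h2
    nlinarith [norm_nonneg P]
  have hedge : ∀ (x q : H) (σ : ℝ), 0 ≤ σ → σ ≤ δ → q ∈ subdiff lam f x → ‖q‖ ≤ M →
      ∃ Y P, P ∈ subdiff lam f Y ∧ Y + σ • P = x ∧ ‖P‖ ≤ 2 * M := by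
    intro x q σ h1 h2 h3 h4
    rcases h1.eq_or_lt with h | h
    · refine ⟨x, q, h3, by rw [← h]; simp, by linarith⟩
    · obtain ⟨Y, P, hP, hYP⟩ := res_exists hf hc hl h3 h (hκ.trans_le (hκσ σ h1 h2)) x
      exact ⟨Y, P, hP, hYP, hslope x q Y P σ h h2 h3 h4 hP hYP⟩
  have hex : ∀ u, ∃ Y P, P ∈ subdiff lam f Y ∧ (u ≤ 0 → Y + τ u • P = c 0) ∧
      (1 ≤ u → Y + τ u • P = c 1) ∧ (u ∈ Icc (0 : ℝ) 1 → Y = y u ∧ P = p u) ∧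
      (u ≤ 0 ∨ 1 ≤ u → ‖P‖ ≤ 2 * M) := by
    intro u
    by_cases hu : u ∈ Icc (0 : ℝ) 1
    · refine ⟨y u, p u, hp u hu, fun h => ?_, fun h => ?_, fun _ => ⟨rfl, rfl⟩, fun h => ?_⟩
      · have : u = 0 := le_antisymm h hu.1
        rw [hτ2 u hu, hy u hu, this]
      · have : u = 1 := le_antisymm hu.2 h
        rw [hτ2 u hu, hy u hu, this]
      · rcases h with h | h
        · have e : u = 0 := le_antisymm h hu.1
          refine hslope (c 0) q0 (y u) (p u) δ hδ le_rfl hq0 hM0 (hp u hu) ?_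
          rw [hy u hu, e]
        · have e : u = 1 := le_antisymm hu.2 h
          refine hslope (c 1) q1 (y u) (p u) δ hδ le_rfl hq1 hM1 (hp u hu) ?_
          rw [hy u hu, e]
    · rcases lt_or_ge u 0 with h | h
      · obtain ⟨Y, P, h1, h2, h3⟩ := hedge (c 0) q0 (τ u) (hτ0 u) (hτδ u) hq0 hM0
        exact ⟨Y, P, h1, fun _ => h2, fun h' => by linarith, fun h' => absurd h' hu, fun _ => h3⟩
      · have h' : 1 < u := by
          by_contra h'
          exact hu ⟨h, not_lt.1 h'⟩
        obtain ⟨Y, P, h1, h2, h3⟩ := hedge (c 1) q1 (τ u) (hτ0 u) (hτδ u) hq1 hM1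
        exact ⟨Y, P, h1, fun h'' => by linarith, fun _ => h2, fun h'' => absurd h'' hu, fun _ => h3⟩
  choose Y P hPY hY0 hY1 hYy hPM using hex
  have hgm : AEStronglyMeasurable g (volume.restrict (Icc 0 1)) := hg.aestronglyMeasurable
  set g' : ℝ → H := hgm.mk g with hg'
  have hg'm : StronglyMeasurable g' := hgm.stronglyMeasurable_mk
  have hgg' : g =ᵐ[volume.restrict (Icc 0 1)] g' := hgm.ae_eq_mk
  set m : ℝ → ℝ≥0∞ := fun r => if r ∈ Ioc (0 : ℝ) 1 then ENNReal.ofReal κ⁻¹ * ‖g' r‖ₑ else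
    if r ∈ Ioc (-δ) (1 + δ) then ENNReal.ofReal (4 * M) else 0 with hmdef
  have hmeas : Measurable m :=
    Measurable.ite measurableSet_Ioc (hg'm.enorm.const_mul _)
      (Measurable.ite measurableSet_Ioc measurable_const measurable_const)
  have hm1 : ∀ r ∈ Ioc (0 : ℝ) 1, m r = ENNReal.ofReal κ⁻¹ * ‖g' r‖ₑ := fun r hr => by
    simp only [m]; rw [if_pos hr]
  have hm2 : ∀ r ∈ Ioc (-δ) 0, m r = ENNReal.ofReal (4 * M) := fun r hr => by
    simp only [m]
    rw [if_neg (fun h => by linarith [h.1, hr.2]), if_pos ⟨hr.1, by linarith [hr.2]⟩]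
  have hm3 : ∀ r ∈ Ioc 1 (1 + δ), m r = ENNReal.ofReal (4 * M) := fun r hr => by
    simp only [m]
    rw [if_neg (fun h => by linarith [h.2, hr.1]), if_pos ⟨by linarith [hr.1], hr.2⟩]
  have hm4 : ∀ r, r ∉ Ioc (-δ) (1 + δ) → m r = 0 := fun r hr => by
    simp only [m]
    rw [if_neg (fun h => hr ⟨by linarith [h.1], by linarith [h.2]⟩), if_neg hr]
  have hpar : ∀ (x : H) (s t : ℝ), Y s + τ s • P s = x → Y t + τ t • P t = x → ‖P t‖ ≤ 2 * M →
      ‖Y t - Y s‖ ≤ 4 * M * |τ t - τ s| := by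
    intro x s t h1 h2 h3
    refine (res_param hf (hτ0 s) hκ (hκσ _ (hτ0 s) (hτδ s)) (hPY t) (hPY s) h2 h1 h3).trans ?_
    have : κ⁻¹ * (2 * M) ≤ 4 * M := by nlinarith
    gcongr
  have hreg1 : ∀ s t : ℝ, True → True → s ≤ t → t ≤ 0 → ‖Y t - Y s‖ₑ ≤ ∫⁻ r in Ioc s t, m r := by
    intro s t _ _ hst ht
    have h1 := hpar (c 0) s t (hY0 s (hst.trans ht)) (hY0 t ht) (hPM t (Or.inl ht))
    rw [hτ1 t ht, hτ1 s (hst.trans ht)] at h1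
    rcases le_total t (-δ) with h | h
    · rw [max_eq_left (by linarith), max_eq_left (by linarith)] at h1
      have h2 : ‖Y t - Y s‖ = 0 := le_antisymm (by simpa using h1) (norm_nonneg _)
      rw [← ofReal_norm, h2]; simp
    · rw [← ofReal_norm]
      refine le_trans (ENNReal.ofReal_le_ofReal ?_) (edge_int (C := 4 * M) (s' := max s (-δ))
        (t' := t) (by positivity) (le_max_left _ _) le_rfl (fun r hr => (hm2 r
          ⟨lt_of_le_of_lt (le_max_right _ _) hr.1, hr.2.trans ht⟩).ge))
      refine h1.trans (le_of_eq ?_)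
      congr 1
      rw [max_eq_right (by linarith : 0 ≤ t + δ)]
      rcases le_total s (-δ) with h' | h'
      · rw [max_eq_left (by linarith : s + δ ≤ 0), max_eq_right h', abs_of_nonneg (by linarith)]
        ring
      · rw [max_eq_right (by linarith : 0 ≤ s + δ), max_eq_left h', abs_of_nonneg (by linarith)]
        ring
  have hreg3 : ∀ s t : ℝ, True → True → 1 ≤ s → s ≤ t → ‖Y t - Y s‖ₑ ≤ ∫⁻ r in Ioc s t, m r := by
    intro s t _ _ hs hst
    have h1 := hpar (c 1) s t (hY1 s hs) (hY1 t (hs.trans hst)) (hPM t (Or.inr (hs.trans hst)))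
    rw [hτ3 t (hs.trans hst), hτ3 s hs] at h1
    rcases le_total (1 + δ) s with h | h
    · rw [max_eq_left (by linarith), max_eq_left (by linarith)] at h1
      have h2 : ‖Y t - Y s‖ = 0 := le_antisymm (by simpa using h1) (norm_nonneg _)
      rw [← ofReal_norm, h2]; simp
    · rw [← ofReal_norm]
      refine le_trans (ENNReal.ofReal_le_ofReal ?_) (edge_int (C := 4 * M) (s' := s)
        (t' := min t (1 + δ)) (by positivity) le_rfl (min_le_left _ _) (fun r hr => (hm3 r
          ⟨lt_of_le_of_lt hs hr.1, hr.2.trans (min_le_right _ _)⟩).ge))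
      refine h1.trans (le_of_eq ?_)
      congr 1
      rw [max_eq_right (by linarith : 0 ≤ 1 + δ - s)]
      rcases le_total (1 + δ) t with h' | h'
      · rw [max_eq_left (by linarith : 1 + δ - t ≤ 0), min_eq_right h', abs_of_nonpos (by linarith)]
        ring
      · rw [max_eq_right (by linarith : 0 ≤ 1 + δ - t), min_eq_left h', abs_of_nonpos (by linarith)]
        ring
  have hreg2 : ∀ s t : ℝ, s ≤ 1 → t ≤ 1 → 0 ≤ s → s ≤ t →
      ‖Y t - Y s‖ₑ ≤ ∫⁻ r in Ioc s t, m r := by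
    intro s t hs1 ht1 hs hst
    have hsI : s ∈ Icc (0 : ℝ) 1 := ⟨hs, hs1⟩
    have htI : t ∈ Icc (0 : ℝ) 1 := ⟨hs.trans hst, ht1⟩
    have h1 := res_contr hf hδ.le (hp t htI) (hp s hsI)
    rw [hy t htI, hy s hsI] at h1
    have h2 : ‖y t - y s‖ ≤ κ⁻¹ * ‖c t - c s‖ := by
      rw [← div_eq_inv_mul, le_div_iff₀ hκ]
      have := hκσ δ hδ.le le_rfl
      nlinarith [norm_nonneg (y t - y s)]
    have hint : ∀ a ∈ Icc (0 : ℝ) 1, ∀ b ∈ Icc (0 : ℝ) 1, IntervalIntegrable g volume a b := by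
      intro a ha b hb
      rw [intervalIntegrable_iff]
      refine hg.mono_set ?_
      exact uIoc_subset_uIcc.trans (uIcc_subset_Icc ha hb)
    have h3 : c t - c s = ∫ r in s..t, g r := by
      rw [hcg t htI, hcg s hsI, add_sub_add_left_eq_sub,
        intervalIntegral.integral_interval_sub_left (hint _ (by simp) _ htI)
          (hint _ (by simp) _ hsI)]
    rw [(hYy t htI).1, (hYy s hsI).1]
    calc ‖y t - y s‖ₑ ≤ ENNReal.ofReal κ⁻¹ * ‖c t - c s‖ₑ := by
          rw [← ofReal_norm, ← ofReal_norm, ← ENNReal.ofReal_mul (by positivity)]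
          exact ENNReal.ofReal_le_ofReal h2
      _ ≤ ENNReal.ofReal κ⁻¹ * ∫⁻ r in Ioc s t, ‖g r‖ₑ := by
          gcongr
          rw [h3, intervalIntegral.integral_of_le hst]
          exact enorm_integral_le_lintegral_enorm _
      _ = ∫⁻ r in Ioc s t, ENNReal.ofReal κ⁻¹ * ‖g r‖ₑ := by
          rw [lintegral_const_mul' _ _ ENNReal.ofReal_ne_top]
      _ = ∫⁻ r in Ioc s t, m r := by
          refine lintegral_congr_ae ?_
          have hsub : Ioc s t ⊆ Icc 0 1 := fun r hr => ⟨hs.trans hr.1.le, hr.2.trans ht1⟩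
          filter_upwards [ae_restrict_of_ae_restrict_of_subset hsub hgg',
            ae_restrict_mem measurableSet_Ioc] with r hr1 hr2
          rw [hm1 r ⟨lt_of_le_of_lt hs hr2.1, hr2.2.trans ht1⟩, hr1]
  have hA : ∀ s t : ℝ, True → True → s ≤ t → t ≤ 1 → ‖Y t - Y s‖ₑ ≤ ∫⁻ r in Ioc s t, m r := by
    intro s t _ _ hst ht
    exact glue_bound (r := 0) (P := fun _ => True) (Q := fun x => x ≤ 1) trivial zero_le_one
      hreg1 hreg2 s t (fun _ => trivial) (fun _ => trivial) (fun _ => hst.trans ht) (fun _ => ht) hst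
  have hB : ∀ s t : ℝ, s ≤ t → ‖Y t - Y s‖ₑ ≤ ∫⁻ r in Ioc s t, m r := fun s t hst =>
    glue_bound (r := 1) (P := fun _ => True) (Q := fun _ => True) trivial trivial
      hA hreg3 s t (fun _ => trivial) (fun _ => trivial) (fun _ => trivial) (fun _ => trivial) hst
  have hdist : ∀ (x : H) (u : ℝ), Y u + τ u • P u = x → ‖Y u - x‖ = τ u * ‖P u‖ := by
    intro x u h
    rw [← h, sub_add_cancel_left, norm_neg, norm_smul, Real.norm_eq_abs, abs_of_nonneg (hτ0 u)]
  refine ⟨Y, P, m, hmeas, hB, ?_, hPY, fun u hu => (hYy u hu).2, hPM, ?_, ?_, ?_, ?_, ?_⟩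
  · have h1 := three_int (F := fun r => m r ^ 2)
      (G := fun r => ENNReal.ofReal ((κ ^ 2)⁻¹) * ‖g' r‖ₑ ^ 2) (C := ENNReal.ofReal (4 * M) ^ 2)
      hδ.le (fun u hu => by
        rw [hm1 u hu, mul_pow, ← ENNReal.ofReal_pow (by positivity), inv_pow])
      (fun u hu => by rw [hm2 u hu]) (fun u hu => by rw [hm3 u hu])
      (fun u hu => by rw [hm4 u hu]; simp)
    refine h1.trans (le_of_eq ?_)
    rw [lintegral_const_mul' _ _ ENNReal.ofReal_ne_top]
    congr 2
    refine lintegral_congr_ae ?_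
    filter_upwards [ae_restrict_of_ae_restrict_of_subset Ioc_subset_Icc_self hgg'] with r hr
    rw [hr]
  · have h1 := hY0 (-δ) (by linarith)
    rw [hτ1 _ (by linarith)] at h1
    simpa using h1
  · have h1 := hY1 (1 + δ) (by linarith)
    rw [hτ3 _ (by linarith)] at h1
    simpa using h1
  · intro u hu
    rw [hdist _ _ (hY0 u hu)]
    nlinarith [mul_le_mul (hτδ u) (hPM u (Or.inl hu)) (norm_nonneg _) hδ.le]
  · intro u hu
    rw [hdist _ _ (hY1 u hu)]
    nlinarith [mul_le_mul (hτδ u) (hPM u (Or.inr hu)) (norm_nonneg _) hδ.le]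
  · intro u hu
    rw [(hYy u hu).1, ← hy u hu, sub_add_cancel_left, norm_neg, norm_smul, Real.norm_eq_abs,
      abs_of_pos hδ]

lemma edge_curve {lam : ℝ} {f : H → EReal} (hf : ∀ x, f x ≠ ⊥) (hc : LambdaConvex lam f)
    (hl : LowerSemicontinuous f) {c g : ℝ → H} (hg : IntegrableOn g (Icc 0 1))
    (hcg : ∀ t ∈ Icc (0 : ℝ) 1, c t = c 0 + ∫ s in 0..t, g s)
    (hgfin : ∫⁻ t in Ioc 0 1, ‖g t‖ₑ ^ 2 ≠ ⊤)
    {q0 q1 : H} (hq0 : q0 ∈ subdiff lam f (c 0)) (hq1 : q1 ∈ subdiff lam f (c 1)) {M : ℝ}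
    (hM0 : ‖q0‖ ≤ M) (hM1 : ‖q1‖ ≤ M) {δ : ℝ} (hδ : 0 < δ) (hδ1 : δ ≤ 1 / 2)
    (hlam : |lam| * δ ≤ 1 / 2)
    {y p : ℝ → H} (hp : ∀ u ∈ Icc (0 : ℝ) 1, p u ∈ subdiff lam f (y u))
    (hy : ∀ u ∈ Icc (0 : ℝ) 1, y u + δ • p u = c u) :
    ∃ η : ℝ → H, ContinuousOn η (Icc 0 1) ∧
      Theta lam f (c 0) (c 1) η ≤
        ENNReal.ofReal ((1 + 2 * δ) * ((1 - |lam| * δ) ^ 2)⁻¹) * (∫⁻ t in Ioc 0 1, ‖g t‖ₑ ^ 2) +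
        (∫⁻ t in Ioc 0 1, ‖p t‖ₑ ^ 2) + ENNReal.ofReal (72 * M ^ 2 * δ) ∧
      ∀ t ∈ Icc (0 : ℝ) 1, ∃ u ∈ Icc (0 : ℝ) 1, |u - t| ≤ δ ∧
        ‖η t - c u‖ ≤ max (2 * M * δ) (δ * ‖p u‖) := by
  obtain ⟨Y, P, m, hmeas, hYm, hmint, hPY, hPp, hPM, hYa, hYb, hd0, hd1, hdm⟩ :=
    edge_full hf hc hl hg hcg hq0 hq1 hM0 hM1 hδ hlam hp hy
  have hMnn : 0 ≤ M := (norm_nonneg _).trans hM0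
  set k : ℝ := 1 + 2 * δ with hk
  have hkpos : 0 < k := by linarith
  set V := ∫⁻ t in Ioc 0 1, ‖g t‖ₑ ^ 2 with hV
  have hmfin : ∫⁻ r, m r ^ 2 ≠ ⊤ := by
    refine ne_top_of_le_ne_top ?_ hmint
    exact ENNReal.add_ne_top.2 ⟨ENNReal.mul_ne_top ENNReal.ofReal_ne_top hgfin,
      ENNReal.mul_ne_top ENNReal.ofReal_ne_top (ENNReal.pow_ne_top ENNReal.ofReal_ne_top)⟩
  set m' : ℝ → ℝ≥0∞ := fun t => ENNReal.ofReal k * m (-δ + k * t) with hm'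
  have hm'meas : Measurable m' :=
    (hmeas.comp ((measurable_id.const_mul k).const_add (-δ))).const_mul _
  have hkk : ENNReal.ofReal k * ENNReal.ofReal k⁻¹ = 1 := by
    rw [← ENNReal.ofReal_mul hkpos.le, mul_inv_cancel₀ hkpos.ne', ENNReal.ofReal_one]
  have hm'int : ∫⁻ t, m' t ^ 2 = ENNReal.ofReal k * ∫⁻ r, m r ^ 2 := by
    simp only [m', mul_pow]
    rw [lintegral_const_mul' _ _ (ENNReal.pow_ne_top ENNReal.ofReal_ne_top),
      lintegral_affine (fun r => m r ^ 2) hkpos (-δ), ← mul_assoc, sq, mul_assoc (ENNReal.ofReal k),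
      hkk, mul_one]
  set η : ℝ → H := fun t => Y (-δ + k * t) with hη
  have hηm : ∀ s t : ℝ, s ≤ t → ‖η t - η s‖ₑ ≤ ∫⁻ r in Ioc s t, m' r := by
    intro s t hst
    refine (hYm (-δ + k * s) (-δ + k * t) (by nlinarith)).trans (le_of_eq ?_)
    rw [← lintegral_indicator measurableSet_Ioc, ← lintegral_indicator measurableSet_Ioc]
    have h1 : ∀ r, (Ioc s t).indicator m' r = ENNReal.ofReal k *
        (Ioc (-δ + k * s) (-δ + k * t)).indicator m (-δ + k * r) := by
      intro r
      simp only [indicator, mem_Ioc, add_lt_add_iff_left, add_le_add_iff_left,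
        mul_lt_mul_iff_right₀ hkpos, mul_le_mul_iff_right₀ hkpos]
      split_ifs
      · rfl
      · simp
    simp_rw [h1]
    rw [lintegral_const_mul' _ _ ENNReal.ofReal_ne_top,
      lintegral_affine ((Ioc (-δ + k * s) (-δ + k * t)).indicator m) hkpos (-δ), ← mul_assoc, hkk,
      one_mul]
  obtain ⟨v, hv1, hv2, hv3⟩ := velocity_of_bound η m' hm'meas
    (by rw [hm'int]; exact ENNReal.mul_ne_top ENNReal.ofReal_ne_top hmfin) hηm
  have hη0 : η 0 = c 0 := by simp only [η]; rw [mul_zero, add_zero, hYa]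
  have hη1 : η 1 = c 1 := by
    simp only [η]; rw [show -δ + k * 1 = 1 + δ by rw [hk]; ring, hYb]
  refine ⟨η, ?_, ?_, ?_⟩
  · have h1 : ContinuousOn (fun t => η 0 + ∫ s in 0..t, v s) (Icc 0 1) := by
      refine continuousOn_const.add ?_
      have := intervalIntegral.continuousOn_primitive_interval (μ := volume) (f := v) (a := 0)
        (b := 1) (by rw [uIcc_of_le zero_le_one]; exact hv2)
      rwa [uIcc_of_le zero_le_one] at this
    exact h1.congr hv3
  · unfold Theta
    rw [if_pos ⟨hη0, hη1⟩, action_eq hv2 hv3]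
    have hS : ∫⁻ t in Ioc 0 1, gradNorm lam f (η t) ^ 2 ≤
        (∫⁻ t in Ioc 0 1, ‖p t‖ₑ ^ 2) + ENNReal.ofReal (2 * δ) * ENNReal.ofReal (2 * M) ^ 2 := by
      set F : ℝ → ℝ≥0∞ := (Ioc (-δ) (1 + δ)).indicator fun u => gradNorm lam f (Y u) ^ 2 with hF
      have hFle : ∀ u, F u ≤ ‖P u‖ₑ ^ 2 := by
        intro u
        refine (indicator_le_self _ _ u).trans ?_
        rw [← ofReal_norm]
        exact pow_le_pow_left' (gradNorm_le (hPY u)) 2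
      have hPM' : ∀ u, u ≤ 0 ∨ 1 ≤ u → F u ≤ ENNReal.ofReal (2 * M) ^ 2 := by
        intro u hu
        refine (hFle u).trans ?_
        rw [← ofReal_norm]
        exact pow_le_pow_left' (ENNReal.ofReal_le_ofReal (hPM u hu)) 2
      calc ∫⁻ t in Ioc 0 1, gradNorm lam f (η t) ^ 2
          = ∫⁻ t in Ioc 0 1, F (-δ + k * t) := by
            refine setLIntegral_congr_fun measurableSet_Ioc fun t ht => ?_
            have hmem : -δ + k * t ∈ Ioc (-δ) (1 + δ) := by
              constructor
              · have := mul_pos hkpos ht.1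
                linarith
              · nlinarith [ht.2]
            simp only [F]
            rw [indicator_of_mem hmem]
        _ ≤ ∫⁻ t, F (-δ + k * t) := setLIntegral_le_lintegral _ _
        _ = ENNReal.ofReal k⁻¹ * ∫⁻ u, F u := lintegral_affine F hkpos _
        _ ≤ 1 * ∫⁻ u, F u := by
            gcongr
            rw [ENNReal.ofReal_le_one]
            exact inv_le_one_of_one_le₀ (by linarith)
        _ = ∫⁻ u, F u := one_mul _
        _ ≤ _ := three_int hδ.le (fun u hu => by
              rw [← hPp u (Ioc_subset_Icc_self hu)]; exact hFle u)
            (fun u hu => hPM' u (Or.inl hu.2)) (fun u hu => hPM' u (Or.inr hu.1.le))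
            (fun u hu => indicator_of_notMem hu _)
    have hVel : ∫⁻ t in Ioc 0 1, ‖v t‖ₑ ^ 2 ≤
        ENNReal.ofReal (k * ((1 - |lam| * δ) ^ 2)⁻¹) * V + ENNReal.ofReal (64 * M ^ 2 * δ) := by
      refine hv1.trans ?_
      rw [hm'int]
      refine (mul_le_mul_right hmint _).trans ?_
      rw [mul_add, ← mul_assoc, ← ENNReal.ofReal_mul hkpos.le]
      gcongr
      rw [← ENNReal.ofReal_pow (by positivity), ← ENNReal.ofReal_mul (by positivity),
        ← ENNReal.ofReal_mul hkpos.le]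
      refine ENNReal.ofReal_le_ofReal ?_
      have h2 : k ≤ 2 := by linarith
      have h3 : 0 ≤ 32 * M ^ 2 * δ := by positivity
      nlinarith
    refine (add_le_add hVel hS).trans (le_of_eq ?_)
    rw [← ENNReal.ofReal_pow (by positivity), ← ENNReal.ofReal_mul (by positivity),
      add_add_add_comm, ← ENNReal.ofReal_add (by positivity) (by positivity)]
    congr 2
    ring
  · intro t ht
    have e : -δ + k * t - t = δ * (2 * t - 1) := by rw [hk]; ring
    have e1 : |(-δ + k * t) - t| ≤ δ := by
      rw [e, abs_le]; constructor <;> nlinarith [ht.1, ht.2]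
    have e2 := abs_le.1 e1
    rcases le_total (-δ + k * t) 0 with h | h
    · refine ⟨0, by simp, ?_, (hd0 _ h).trans (le_max_left _ _)⟩
      rw [abs_le]; constructor <;> linarith [ht.1, ht.2]
    rcases le_total 1 (-δ + k * t) with h' | h'
    · refine ⟨1, by simp, ?_, (hd1 _ h').trans (le_max_left _ _)⟩
      rw [abs_le]; constructor <;> linarith [ht.1, ht.2]
    · exact ⟨-δ + k * t, ⟨h, h'⟩, e1, (hdm _ ⟨h, h'⟩).trans (le_max_right _ _)⟩

lemma compact_eventually {ι : Type*} {l : Filter ι} {K : Set H} (hK : IsCompact K)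
    {P : ι → H → Prop} (h : ∀ x ∈ K, ∃ r : ℝ, 0 < r ∧ ∀ᶠ i in l, ∀ x' ∈ Metric.ball x r, P i x') :
    ∀ᶠ i in l, ∀ x ∈ K, P i x := by
  refine hK.induction_on (p := fun s => ∀ᶠ i in l, ∀ x ∈ s, P i x) ?_ ?_ ?_ ?_
  · simp
  · intro s t hst ht
    filter_upwards [ht] with i hi x hx using hi x (hst hx)
  · intro s t hs ht
    filter_upwards [hs, ht] with i h1 h2 x hx
    exact hx.elim (h1 x) (h2 x)
  · intro x hx
    obtain ⟨r, hr, hrP⟩ := h x hx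
    exact ⟨Metric.ball x r, mem_nhdsWithin_of_mem_nhds (Metric.ball_mem_nhds x hr), hrP⟩

lemma sq_young (a e : ℝ≥0∞) {δ : ℝ} (hδ : 0 < δ) :
    (a + e) ^ 2 ≤ ENNReal.ofReal (1 + δ) * a ^ 2 + ENNReal.ofReal (1 + 1 / δ) * e ^ 2 := by
  have hd : 0 < 1 / δ := by positivity
  rcases eq_or_ne a ⊤ with rfl | ha
  · have h1 : ENNReal.ofReal (1 + δ) * ⊤ ^ 2 = ⊤ := by
      rw [ENNReal.top_pow two_ne_zero, ENNReal.mul_top]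
      simpa using by linarith
    rw [h1]; simp
  rcases eq_or_ne e ⊤ with rfl | he
  · have h1 : ENNReal.ofReal (1 + 1 / δ) * ⊤ ^ 2 = ⊤ := by
      rw [ENNReal.top_pow two_ne_zero, ENNReal.mul_top]
      rw [Ne, ENNReal.ofReal_eq_zero]
      linarith
    rw [h1]; simp
  rw [← ENNReal.ofReal_toReal ha, ← ENNReal.ofReal_toReal he]
  have ha0 : 0 ≤ a.toReal := ENNReal.toReal_nonneg
  have he0 : 0 ≤ e.toReal := ENNReal.toReal_nonneg
  rw [← ENNReal.ofReal_add ha0 he0, ← ENNReal.ofReal_pow (by positivity),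
    ← ENNReal.ofReal_pow ha0, ← ENNReal.ofReal_pow he0, ← ENNReal.ofReal_mul (by positivity),
    ← ENNReal.ofReal_mul (by positivity), ← ENNReal.ofReal_add (by positivity) (by positivity)]
  refine ENNReal.ofReal_le_ofReal ?_
  have h1 : (1 + δ) * a.toReal ^ 2 + (1 + 1 / δ) * e.toReal ^ 2 - (a.toReal + e.toReal) ^ 2 =
      (δ * a.toReal - e.toReal) ^ 2 / δ := by
    field_simp
    ring
  have h2 : 0 ≤ (δ * a.toReal - e.toReal) ^ 2 / δ := by positivity
  linarith

lemma res_lip {lam : ℝ} {f : H → EReal} (hf : ∀ x, f x ≠ ⊥) {δ : ℝ} (hδ : 0 ≤ δ)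
    (hlam : |lam| * δ ≤ 1 / 2) {x x' y y' p p' : H} (hp : p ∈ subdiff lam f y)
    (hp' : p' ∈ subdiff lam f y') (h : y + δ • p = x) (h' : y' + δ • p' = x') :
    ‖y - y'‖ ≤ 2 * ‖x - x'‖ := by
  have h1 := res_contr hf hδ hp hp'
  rw [h, h'] at h1
  have h3 : |lam * δ| ≤ 1 / 2 := by rwa [abs_mul, abs_of_nonneg hδ]
  have h4 := (abs_le.1 h3).1
  nlinarith [norm_nonneg (y - y')]

lemma small_ev (C : ℝ) {η : ℝ} (hη : 0 < η) : ∀ᶠ δ : ℝ in 𝓝[>] 0, C * δ ≤ η := by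
  have h : Tendsto (fun δ : ℝ => C * δ) (𝓝[>] 0) (𝓝 (C * 0)) :=
    ((continuous_const.mul continuous_id).tendsto 0).mono_left nhdsWithin_le_nhds
  rw [mul_zero] at h
  filter_upwards [h.eventually_lt_const hη] with δ hδ using hδ.le

lemma res_unif_delta {lam : ℝ} {f : H → EReal} (hf : ∀ x, f x ≠ ⊥) {K : Set H} (hK : IsCompact K)
    (hKD : ∀ x ∈ K, ∀ ε : ℝ, 0 < ε → ∃ z q, q ∈ subdiff lam f z ∧ ‖z - x‖ < ε) {ε : ℝ}
    (hε : 0 < ε) :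
    ∀ᶠ δ : ℝ in 𝓝[>] 0, ∀ x ∈ K, ∀ y p, p ∈ subdiff lam f y → y + δ • p = x → ‖y - x‖ ≤ ε := by
  refine compact_eventually hK fun x hx => ?_
  obtain ⟨z, q, hq, hzx⟩ := hKD x hx (ε / 8) (by positivity)
  refine ⟨ε / 8, by positivity, ?_⟩
  filter_upwards [small_ev |lam| (show (0 : ℝ) < 1 / 2 by norm_num),
    small_ev ‖q‖ (show 0 < ε / 8 by positivity), self_mem_nhdsWithin] with δ h1 h2 h3 x' hx' y p hp hyp
  have hδ : 0 < δ := h3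
  have h4 := res_lip hf hδ.le h1 hp hq hyp rfl
  rw [mem_ball_iff_norm] at hx'
  have h5 : ‖x' - (z + δ • q)‖ ≤ ‖x' - z‖ + ‖q‖ * δ := by
    rw [← sub_sub]
    refine (norm_sub_le _ _).trans ?_
    rw [norm_smul, Real.norm_eq_abs, abs_of_pos hδ, mul_comm]
  have h6 : ‖x' - z‖ ≤ ‖x' - x‖ + ‖z - x‖ := by
    rw [norm_sub_rev z x]; exact norm_sub_le_norm_sub_add_norm_sub _ _ _
  have h7 : ‖y - x'‖ ≤ ‖y - z‖ + ‖x' - z‖ := by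
    rw [norm_sub_rev x' z]; exact norm_sub_le_norm_sub_add_norm_sub _ _ _
  linarith

lemma res_unif_h {lam : ℝ} {fh : ℕ → H → EReal} {f : H → EReal}
    (hfh_proper : ∀ h, ProperFn (fh h)) (hfh_conv : ∀ h, LambdaConvex lam (fh h))
    (hfh_lsc : ∀ h, LowerSemicontinuous (fh h))
    (hf : ProperFn f) (hM : Mosco fh f) {x0 q : ℕ → H} {C : ℝ} (hx0 : ∀ h, ‖x0 h‖ ≤ C)
    (hqC : ∀ h, ‖q h‖ ≤ C) (hq : ∀ h, q h ∈ subdiff lam (fh h) (x0 h)) {δ : ℝ} (hδ : 0 < δ)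
    (hlam : |lam| * δ ≤ 1 / 2) {K : Set H} (hK : IsCompact K) {ε : ℝ} (hε : 0 < ε) :
    (∀ x, ∃ y p, p ∈ subdiff lam f y ∧ y + δ • p = x) ∧
    ∀ᶠ h in atTop, ∀ x ∈ K, ∀ y p y' p', p ∈ subdiff lam (fh h) y → y + δ • p = x →
      p' ∈ subdiff lam f y' → y' + δ • p' = x → ‖y - y'‖ ≤ ε := by
  have hlt : 0 < 1 + lam * δ := by
    have h3 : |lam * δ| ≤ 1 / 2 := by rwa [abs_mul, abs_of_pos hδ]
    linarith [(abs_le.1 h3).1]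
  have hex : ∀ x, ∃ Y P : ℕ → H, (∀ h, P h ∈ subdiff lam (fh h) (Y h)) ∧
      (∀ h, Y h + δ • P h = x) ∧ ∃ y0 p0 : H, p0 ∈ subdiff lam f y0 ∧ y0 + δ • p0 = x ∧
      Tendsto Y atTop (𝓝 y0) := by
    intro x
    choose Y P h1 h2 using fun h =>
      res_exists (hfh_proper h).2 (hfh_conv h) (hfh_lsc h) (hq h) hδ hlt x
    exact ⟨Y, P, h1, h2, res_conv (fun h => (hfh_proper h).2) hf hM hx0 hqC hq hδ hlt x h1 h2⟩
  constructor
  · intro x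
    obtain ⟨Y, P, _, _, y0, p0, h1, h2, _⟩ := hex x
    exact ⟨y0, p0, h1, h2⟩
  refine compact_eventually hK fun x hx => ?_
  obtain ⟨Y, P, hP, hYP, y0, p0, hp0, hy0, hlim⟩ := hex x
  refine ⟨ε / 8, by positivity, ?_⟩
  filter_upwards [Metric.tendsto_nhds.1 hlim (ε / 8) (by positivity)] with h hh x' hx' y p y' p'
    hp hyp hp' hyp'
  rw [mem_ball_iff_norm] at hx'
  rw [dist_eq_norm] at hh
  have h1 := res_lip (hfh_proper h).2 hδ.le hlam hp (hP h) hyp (hYP h)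
  have h2 := res_lip hf.2 hδ.le hlam hp' hp0 hyp' hy0
  have e : y - y' = (y - Y h) + (Y h - y0) - (y' - y0) := by abel
  rw [e]
  refine (norm_sub_le _ _).trans ?_
  have := norm_add_le (y - Y h) (Y h - y0)
  linarith

lemma dense_good {lam : ℝ} {f : H → EReal} (hf : ProperFn f) (hl : LowerSemicontinuous f)
    {γ : ℝ → H} (hγ : ContinuousOn γ (Icc 0 1))
    (hS : ∫⁻ t in Ioc 0 1, gradNorm lam f (γ t) ^ 2 ≠ ⊤) :
    ∀ x ∈ γ '' Icc 0 1, ∀ ε : ℝ, 0 < ε → ∃ z q, q ∈ subdiff lam f z ∧ ‖z - x‖ < ε := by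
  rintro _ ⟨t, ht, rfl⟩ ε hε
  have h1 := ae_lt_top' (gradNorm_meas (lam := lam) hf hl hγ) hS
  rw [ae_restrict_iff' measurableSet_Ioc] at h1
  have hdense := Measure.dense_of_ae h1
  obtain ⟨ρ, hρ, hρε⟩ := Metric.continuousOn_iff.1 hγ t ht ε hε
  have hopen : IsOpen (Ioo (max 0 (t - ρ)) (min 1 (t + ρ))) := isOpen_Ioo
  have hne : (Ioo (max 0 (t - ρ)) (min 1 (t + ρ))).Nonempty := by
    rw [nonempty_Ioo]
    refine max_lt (lt_min zero_lt_one (by linarith [ht.1])) (lt_min (by linarith [ht.2])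
      (by linarith))
  obtain ⟨s, hs1, hs2⟩ := hdense.exists_mem_open hopen hne
  have a1 := (le_max_left _ _).trans_lt hs2.1
  have a2 := (le_max_right _ _).trans_lt hs2.1
  have a3 := hs2.2.trans_le (min_le_left _ _)
  have a4 := hs2.2.trans_le (min_le_right _ _)
  have h2 := hs1 ⟨a1, a3.le⟩
  have h3 : gradNorm lam f (γ s) ≠ ⊤ := by
    intro h
    simp [h] at h2
  obtain ⟨q, hq, _⟩ := gradNorm_exists h3
  refine ⟨γ s, q, hq, ?_⟩
  rw [← dist_eq_norm]
  refine hρε s ⟨a1.le, a3.le⟩ ?_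
  rw [Real.dist_eq, abs_lt]
  constructor <;> linarith

lemma key_lemma {lam : ℝ} {fh : ℕ → H → EReal} {f : H → EReal}
    (hfh_proper : ∀ h, ProperFn (fh h)) (hfh_conv : ∀ h, LambdaConvex lam (fh h))
    (hfh_lsc : ∀ h, LowerSemicontinuous (fh h))
    (hf : ProperFn f) (hf_lsc : LowerSemicontinuous f) (hM : Mosco fh f)
    {xh0 xh1 : ℕ → H} {x0 x1 : H}
    (hx0 : Tendsto xh0 atTop (𝓝 x0)) (hx1 : Tendsto xh1 atTop (𝓝 x1))
    {q0 q1 : ℕ → H} {M : ℝ} (hxM : ∀ h, ‖xh0 h‖ ≤ M)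
    (hq0M : ∀ h, ‖q0 h‖ ≤ M) (hq0 : ∀ h, q0 h ∈ subdiff lam (fh h) (xh0 h))
    (hq1M : ∀ h, ‖q1 h‖ ≤ M) (hq1 : ∀ h, q1 h ∈ subdiff lam (fh h) (xh1 h))
    {γ g : ℝ → H} (hγ : ContinuousOn γ (Icc 0 1)) (hγ0 : γ 0 = x0) (hγ1 : γ 1 = x1)
    (hg : IntegrableOn g (Icc 0 1)) (hγg : ∀ t ∈ Icc (0 : ℝ) 1, γ t = γ 0 + ∫ s in 0..t, g s)
    (hV : ∫⁻ t in Ioc 0 1, ‖g t‖ₑ ^ 2 ≠ ⊤)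
    (hS : ∫⁻ t in Ioc 0 1, gradNorm lam f (γ t) ^ 2 ≠ ⊤) {θ : ℝ} (hθ : 0 < θ) :
    ∀ᶠ h in atTop, ∃ η : ℝ → H, ContinuousOn η (Icc 0 1) ∧
      (∀ t ∈ Icc (0 : ℝ) 1, ‖η t - γ t‖ ≤ θ) ∧
      Theta lam (fh h) (xh0 h) (xh1 h) η ≤ ENNReal.ofReal (1 + θ) *
        ((∫⁻ t in Ioc 0 1, ‖g t‖ₑ ^ 2) + ∫⁻ t in Ioc 0 1, gradNorm lam f (γ t) ^ 2) +
        ENNReal.ofReal θ := by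
  have hMnn : 0 ≤ M := (norm_nonneg _).trans (hq0M 0)
  have hK : IsCompact (γ '' Icc 0 1) := isCompact_Icc.image_of_continuousOn hγ
  have hucont := isCompact_Icc.uniformContinuousOn_of_continuous hγ
  obtain ⟨ρ, hρ, hω⟩ := Metric.uniformContinuousOn_iff.1 hucont (θ / 8) (by positivity)
  -- choice of `δ`
  have hev1 : ∀ᶠ δ : ℝ in 𝓝[>] 0, (1 + 2 * δ) * (1 + δ) * ((1 - |lam| * δ) ^ 2)⁻¹ ≤ 1 + θ := by
    have hc : ContinuousAt
        (fun δ : ℝ => (1 + 2 * δ) * (1 + δ) * ((1 - |lam| * δ) ^ 2)⁻¹) 0 := by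
      refine ContinuousAt.mul (by fun_prop) (ContinuousAt.inv₀ (by fun_prop) (by simp))
    have ht : Tendsto (fun δ : ℝ => (1 + 2 * δ) * (1 + δ) * ((1 - |lam| * δ) ^ 2)⁻¹) (𝓝[>] 0)
        (𝓝 1) := by
      have := hc.tendsto.mono_left (nhdsWithin_le_nhds (s := Ioi 0))
      simpa using this
    filter_upwards [ht.eventually_lt_const (show (1 : ℝ) < 1 + θ by linarith)] with δ h using h.le
  obtain ⟨δ, hδc, hδ1, hlam, hδ72, hδM, hδρ, hδK, hδ⟩ :=
    (hev1.and ((small_ev 1 (show (0 : ℝ) < 1 / 2 by norm_num)).and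
      ((small_ev |lam| (show (0 : ℝ) < 1 / 2 by norm_num)).and
      ((small_ev (72 * M ^ 2 + 2) hθ).and ((small_ev (2 * M) (show 0 < θ / 8 by positivity)).and
      ((small_ev 2 hρ).and ((res_unif_delta hf.2 hK
        (dense_good hf hf_lsc hγ hS) (show 0 < θ / 8 by positivity)).and
        self_mem_nhdsWithin))))))).exists
  replace hδ : 0 < δ := hδ
  rw [one_mul] at hδ1
  set κ : ℝ := 1 - |lam| * δ with hκdef
  have hκ2 : 1 / 2 ≤ κ := by linarith
  have hκ : 0 < κ := by linarith
  have hκi : (κ ^ 2)⁻¹ ≤ 4 := by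
    rw [inv_le_comm₀ (by positivity) (by norm_num)]
    nlinarith
  -- choice of `ε`
  have hev2 : ∀ᶠ ε : ℝ in 𝓝[>] 0, 8 * (1 + 1 / δ) * ε ^ 2 ≤ δ ∧
      (1 + 1 / δ) * (ε / δ) ^ 2 ≤ δ := by
    have t1 : Tendsto (fun ε : ℝ => 8 * (1 + 1 / δ) * ε ^ 2) (𝓝[>] 0) (𝓝 0) := by
      have hc : Continuous (fun ε : ℝ => 8 * (1 + 1 / δ) * ε ^ 2) := by fun_prop
      have := (hc.tendsto 0).mono_left (nhdsWithin_le_nhds (s := Ioi 0))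
      simpa using this
    have t2 : Tendsto (fun ε : ℝ => (1 + 1 / δ) * (ε / δ) ^ 2) (𝓝[>] 0) (𝓝 0) := by
      have hc : Continuous (fun ε : ℝ => (1 + 1 / δ) * (ε / δ) ^ 2) := by fun_prop
      have := (hc.tendsto 0).mono_left (nhdsWithin_le_nhds (s := Ioi 0))
      simpa using this
    filter_upwards [t1.eventually_lt_const hδ, t2.eventually_lt_const hδ] with ε h1 h2
    exact ⟨h1.le, h2.le⟩
  obtain ⟨ε, ⟨hε1, hε2⟩, hεθ, hε⟩ :=
    (hev2.and ((small_ev 1 (show 0 < θ / 8 by positivity)).and self_mem_nhdsWithin)).exists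
  replace hε : 0 < ε := hε
  rw [one_mul] at hεθ
  obtain ⟨hJ, hevh⟩ := res_unif_h hfh_proper hfh_conv hfh_lsc hf hM hxM hq0M hq0 hδ hlam hK
    (show 0 < ε / 4 by positivity)
  choose Jy Jp hJp hJy using hJ
  filter_upwards [hevh, Metric.tendsto_nhds.1 hx0 (ε / 8) (by positivity),
    Metric.tendsto_nhds.1 hx1 (ε / 8) (by positivity)] with h hres ha hb
  rw [dist_eq_norm] at ha hb
  have hFh := (hfh_proper h).2
  have hlt : 0 < 1 + lam * δ := by
    have h3 : |lam * δ| ≤ 1 / 2 := by rwa [abs_mul, abs_of_pos hδ]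
    linarith [(abs_le.1 h3).1]
  set a := xh0 h - x0 with hadef
  set b := xh1 h - x1 with hbdef
  set c : ℝ → H := fun t => γ t + ((1 - t) • a + t • b) with hcdef
  have hc0 : c 0 = xh0 h := by simp [c, hγ0, a]
  have hc1 : c 1 = xh1 h := by simp [c, hγ1, b]
  have hcγ : ∀ t ∈ Icc (0 : ℝ) 1, ‖c t - γ t‖ ≤ ε / 4 := by
    intro t ht
    simp only [c, add_sub_cancel_left]
    refine (norm_add_le _ _).trans ?_
    rw [norm_smul, norm_smul, Real.norm_eq_abs, Real.norm_eq_abs, abs_of_nonneg ht.1,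
      abs_of_nonneg (sub_nonneg.2 ht.2)]
    nlinarith [norm_nonneg a, norm_nonneg b, ht.1, ht.2]
  have hdn : ‖b - a‖ ≤ ε := by
    have := norm_sub_le b a
    linarith
  have hgc : IntegrableOn (fun t => g t + (b - a)) (Icc 0 1) :=
    hg.add (integrableOn_const (by simp))
  have hcg : ∀ t ∈ Icc (0 : ℝ) 1, c t = c 0 + ∫ s in 0..t, (g s + (b - a)) := by
    intro t ht
    have hii : IntervalIntegrable g volume 0 t := by
      rw [intervalIntegrable_iff_integrableOn_Ioc_of_le ht.1]
      exact hg.mono_set fun s hs => ⟨hs.1.le, hs.2.trans ht.2⟩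
    rw [intervalIntegral.integral_add hii intervalIntegrable_const,
      intervalIntegral.integral_const]
    simp only [c]
    rw [hγg t ht]
    module
  choose y p hp hy using fun t : ℝ =>
    res_exists hFh (hfh_conv h) (hfh_lsc h) (hq0 h) hδ hlt (c t)
  -- comparison of the resolvents
  have hpdist : ∀ t, δ * ‖p t‖ = ‖c t - y t‖ := by
    intro t
    rw [← hy t, add_sub_cancel_left, norm_smul, Real.norm_eq_abs, abs_of_pos hδ]
  have hJdist : ∀ x, δ * ‖Jp x‖ = ‖Jy x - x‖ := by
    intro x
    rw [norm_sub_rev]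
    conv_rhs => rw [← hJy x]
    rw [hJy x]
    have : x - Jy x = δ • Jp x := by
      rw [sub_eq_iff_eq_add', hJy x]
    rw [this, norm_smul, Real.norm_eq_abs, abs_of_pos hδ]
  have hcomp : ∀ t ∈ Icc (0 : ℝ) 1, δ * ‖p t‖ ≤ δ * ‖Jp (γ t)‖ + ε := by
    intro t ht
    obtain ⟨z, r, hr, hz⟩ := res_exists hFh (hfh_conv h) (hfh_lsc h) (hq0 h) hδ hlt (γ t)
    have h1 := hres (γ t) (mem_image_of_mem γ ht) z r (Jy (γ t)) (Jp (γ t)) hr hz (hJp _) (hJy _)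
    have h2 := res_lip hFh hδ.le hlam (hp t) hr (hy t) hz
    have h3 := hcγ t ht
    rw [hpdist, hJdist]
    have e : c t - y t = (c t - γ t) - (y t - z) - (z - Jy (γ t)) - (Jy (γ t) - γ t) := by abel
    rw [e]
    have n1 := norm_sub_le ((c t - γ t) - (y t - z) - (z - Jy (γ t))) (Jy (γ t) - γ t)
    have n2 := norm_sub_le ((c t - γ t) - (y t - z)) (z - Jy (γ t))
    have n3 := norm_sub_le (c t - γ t) (y t - z)
    linarith
  have hslope : ∀ t, ‖Jp (γ t)‖ₑ ≤ ENNReal.ofReal κ⁻¹ * gradNorm lam f (γ t) := by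
    intro t
    rcases eq_or_ne (gradNorm lam f (γ t)) ⊤ with h1 | h1
    · rw [h1, ENNReal.mul_top (by simpa using hκ)]
      exact le_top
    obtain ⟨q, hq, hqn⟩ := gradNorm_exists h1
    rw [hqn, ← ofReal_norm, ← ENNReal.ofReal_mul (by positivity)]
    refine ENNReal.ofReal_le_ofReal ?_
    rw [← hJy (γ t)] at hq
    have h2 := res_slope hf.2 hδ (hJp (γ t)) hq
    have h3 : κ ≤ 1 + lam * δ := by
      have := neg_abs_le lam
      nlinarith
    rw [← div_eq_inv_mul, le_div_iff₀ hκ]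
    nlinarith [norm_nonneg (Jp (γ t))]
  have hpint : ∫⁻ t in Ioc 0 1, ‖p t‖ₑ ^ 2 ≤ ENNReal.ofReal (1 + θ) *
      (∫⁻ t in Ioc 0 1, gradNorm lam f (γ t) ^ 2) + ENNReal.ofReal δ := by
    calc ∫⁻ t in Ioc 0 1, ‖p t‖ₑ ^ 2
        ≤ ∫⁻ t in Ioc (0 : ℝ) 1, (ENNReal.ofReal (1 + θ) * gradNorm lam f (γ t) ^ 2 +
          ENNReal.ofReal δ) := by
          refine setLIntegral_mono' measurableSet_Ioc fun t ht => ?_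
          have h1 : ‖p t‖ₑ ≤ ENNReal.ofReal κ⁻¹ * gradNorm lam f (γ t) +
              ENNReal.ofReal (ε / δ) := by
            refine le_trans ?_ (add_le_add_left (hslope t) _)
            rw [← ofReal_norm, ← ofReal_norm, ← ENNReal.ofReal_add (by positivity) (by positivity)]
            refine ENNReal.ofReal_le_ofReal ?_
            have := hcomp t (Ioc_subset_Icc_self ht)
            have e : ‖Jp (γ t)‖ + ε / δ = (δ * ‖Jp (γ t)‖ + ε) / δ := by field_simp
            rw [e, le_div_iff₀ hδ]
            linarith
          refine (pow_le_pow_left' h1 2).trans ((sq_young _ _ hδ).trans ?_)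
          rw [mul_pow, ← mul_assoc, ← ENNReal.ofReal_pow (by positivity),
            ← ENNReal.ofReal_pow (by positivity), ← ENNReal.ofReal_mul (by positivity),
            ← ENNReal.ofReal_mul (by positivity)]
          refine add_le_add (mul_le_mul_left (ENNReal.ofReal_le_ofReal ?_) _)
            (ENNReal.ofReal_le_ofReal hε2)
          refine le_trans ?_ hδc
          rw [inv_pow]
          have : 1 + δ ≤ (1 + 2 * δ) * (1 + δ) := by nlinarith
          gcongr
      _ = _ := by
          rw [lintegral_add_right _ measurable_const, lintegral_const_mul' _ _ ENNReal.ofReal_ne_top]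
          simp
  have hvint : ∫⁻ t in Ioc 0 1, ‖g t + (b - a)‖ₑ ^ 2 ≤ ENNReal.ofReal (1 + δ) *
      (∫⁻ t in Ioc 0 1, ‖g t‖ₑ ^ 2) + ENNReal.ofReal ((1 + 1 / δ) * ε ^ 2) := by
    calc ∫⁻ t in Ioc 0 1, ‖g t + (b - a)‖ₑ ^ 2
        ≤ ∫⁻ t in Ioc (0 : ℝ) 1, (ENNReal.ofReal (1 + δ) * ‖g t‖ₑ ^ 2 +
          ENNReal.ofReal ((1 + 1 / δ) * ε ^ 2)) := by
          refine lintegral_mono fun t => ?_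
          refine (pow_le_pow_left' (enorm_add_le _ _) 2).trans ((sq_young _ _ hδ).trans ?_)
          refine add_le_add le_rfl ?_
          rw [← ofReal_norm, ← ENNReal.ofReal_pow (by positivity),
            ← ENNReal.ofReal_mul (by positivity)]
          refine ENNReal.ofReal_le_ofReal ?_
          gcongr
      _ = _ := by
          rw [lintegral_add_right _ measurable_const, lintegral_const_mul' _ _ ENNReal.ofReal_ne_top]
          simp
  have hvfin : ∫⁻ t in Ioc 0 1, ‖g t + (b - a)‖ₑ ^ 2 ≠ ⊤ := by
    refine ne_top_of_le_ne_top ?_ hvint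
    exact ENNReal.add_ne_top.2 ⟨ENNReal.mul_ne_top ENNReal.ofReal_ne_top hV, ENNReal.ofReal_ne_top⟩
  obtain ⟨η, hη1, hη2, hη3⟩ := edge_curve hFh (hfh_conv h) (hfh_lsc h) hgc hcg hvfin
    (by rw [hc0]; exact hq0 h) (by rw [hc1]; exact hq1 h) (hq0M h) (hq1M h) hδ hδ1 hlam
    (fun u _ => hp u) (fun u _ => hy u)
  refine ⟨η, hη1, ?_, ?_⟩
  · intro t ht
    obtain ⟨u, hu, hut, huη⟩ := hη3 t ht
    have h1 : max (2 * M * δ) (δ * ‖p u‖) ≤ θ / 4 := by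
      refine max_le (by linarith) ?_
      have h2 := hcomp u hu
      have h3 := hδK (γ u) (mem_image_of_mem γ hu) _ _ (hJp (γ u)) (hJy (γ u))
      rw [← hJdist] at h3
      linarith
    have h2 : ‖γ u - γ t‖ < θ / 8 := by
      rw [← dist_eq_norm]
      refine hω u hu t ht ?_
      rw [Real.dist_eq]
      linarith
    have h3 := hcγ u hu
    have e : η t - γ t = (η t - c u) + (c u - γ u) + (γ u - γ t) := by abel
    rw [e]
    have n1 := norm_add_le ((η t - c u) + (c u - γ u)) (γ u - γ t)
    have n2 := norm_add_le (η t - c u) (c u - γ u)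
    linarith
  · rw [hc0, hc1] at hη2
    refine hη2.trans ?_
    set V := ∫⁻ t in Ioc 0 1, ‖g t‖ₑ ^ 2 with hVdef
    set S := ∫⁻ t in Ioc 0 1, gradNorm lam f (γ t) ^ 2 with hSdef
    have hv : ENNReal.ofReal ((1 + 2 * δ) * (κ ^ 2)⁻¹) *
        (∫⁻ t in Ioc 0 1, ‖g t + (b - a)‖ₑ ^ 2) ≤
        ENNReal.ofReal (1 + θ) * V + ENNReal.ofReal δ := by
      refine (mul_le_mul_right hvint _).trans ?_
      rw [mul_add, ← mul_assoc, ← ENNReal.ofReal_mul (by positivity),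
        ← ENNReal.ofReal_mul (by positivity)]
      refine add_le_add (mul_le_mul_left (ENNReal.ofReal_le_ofReal ?_) _)
        (ENNReal.ofReal_le_ofReal ?_)
      · refine le_trans (le_of_eq ?_) hδc
        ring
      · refine le_trans ?_ hε1
        rw [← mul_assoc]
        have h8 : (1 + 2 * δ) * (κ ^ 2)⁻¹ ≤ 8 := by
          have : (0 : ℝ) ≤ (κ ^ 2)⁻¹ := by positivity
          nlinarith
        gcongr
    calc _ ≤ (ENNReal.ofReal (1 + θ) * V + ENNReal.ofReal δ) +
          (ENNReal.ofReal (1 + θ) * S + ENNReal.ofReal δ) + ENNReal.ofReal (72 * M ^ 2 * δ) :=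
          add_le_add (add_le_add hv hpint) le_rfl
      _ = ENNReal.ofReal (1 + θ) * (V + S) + ENNReal.ofReal ((72 * M ^ 2 + 2) * δ) := by
          have e : ENNReal.ofReal ((72 * M ^ 2 + 2) * δ) =
              ENNReal.ofReal δ + ENNReal.ofReal δ + ENNReal.ofReal (72 * M ^ 2 * δ) := by
            rw [show (72 * M ^ 2 + 2) * δ = (δ + δ) + 72 * M ^ 2 * δ by ring,
              ENNReal.ofReal_add (by positivity) (by positivity), ENNReal.ofReal_add hδ.le hδ.le]
          rw [e]
          ring
      _ ≤ _ := add_le_add le_rfl (ENNReal.ofReal_le_ofReal hδ72)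


lemma limsup_part (lam : ℝ) (fh : ℕ → H → EReal) (f : H → EReal)
    (hfh_proper : ∀ h, ProperFn (fh h)) (hfh_conv : ∀ h, LambdaConvex lam (fh h))
    (hfh_lsc : ∀ h, LowerSemicontinuous (fh h))
    (hf_proper : ProperFn f) (hf_lsc : LowerSemicontinuous f)
    (hM : Mosco fh f)
    (xh0 xh1 : ℕ → H) (x0 x1 : H)
    (hx0 : Tendsto xh0 atTop (𝓝 x0)) (hx1 : Tendsto xh1 atTop (𝓝 x1))
    (hb0 : (⨆ h, gradNorm lam (fh h) (xh0 h)) ≠ ⊤)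
    (hb1 : (⨆ h, gradNorm lam (fh h) (xh1 h)) ≠ ⊤)
    (γ : ℝ → H) (hγ : ContinuousOn γ (Icc 0 1)) :
      ∃ γh : ℕ → ℝ → H, (∀ h, ContinuousOn (γh h) (Icc 0 1)) ∧
        TendstoUniformlyOn γh γ atTop (Icc 0 1) ∧
        Filter.limsup (fun h => Theta lam (fh h) (xh0 h) (xh1 h) (γh h)) atTop
          ≤ Theta lam f x0 x1 γ := by
  by_cases htop : Theta lam f x0 x1 γ = ⊤
  · refine ⟨fun _ => γ, fun _ => hγ, ?_, by rw [htop]; exact le_top⟩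
    rw [Metric.tendstoUniformlyOn_iff]
    intro ε hε
    exact Eventually.of_forall fun h t _ => by simpa using hε
  obtain ⟨hγ0, hγ1, g, hg, hγg, hΘ⟩ := theta_data htop
  rw [hΘ] at htop ⊢
  obtain ⟨hV, hS⟩ := ENNReal.add_ne_top.1 htop
  have ex : ∀ (xh : ℕ → H), (⨆ h, gradNorm lam (fh h) (xh h)) ≠ ⊤ →
      ∃ (q : ℕ → H) (C : ℝ), (∀ h, ‖q h‖ ≤ C) ∧ ∀ h, q h ∈ subdiff lam (fh h) (xh h) := by
    intro xh hb
    have h1 : ∀ h, gradNorm lam (fh h) (xh h) ≤ ⨆ h, gradNorm lam (fh h) (xh h) :=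
      fun h => le_iSup (fun h => gradNorm lam (fh h) (xh h)) h
    choose q hq hqn using fun h => gradNorm_exists (ne_top_of_le_ne_top hb (h1 h))
    refine ⟨q, (⨆ h, gradNorm lam (fh h) (xh h)).toReal, fun h => ?_, hq⟩
    have h2 := h1 h
    rw [hqn h] at h2
    exact (ENNReal.ofReal_le_iff_le_toReal hb).1 h2
  obtain ⟨q0, C0, hC0, hq0⟩ := ex xh0 hb0
  obtain ⟨q1, C1, hC1, hq1⟩ := ex xh1 hb1
  obtain ⟨C2, hC2⟩ := hx0.norm.bddAbove_range
  have hC2' : ∀ h, ‖xh0 h‖ ≤ C2 := fun h => hC2 (mem_range_self h)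
  have key := fun (θ : ℝ) (hθ : 0 < θ) => key_lemma hfh_proper hfh_conv hfh_lsc hf_proper hf_lsc hM
    hx0 hx1 (M := max C2 (max C0 C1))
    (fun h => (hC2' h).trans (le_max_left _ _))
    (fun h => (hC0 h).trans ((le_max_left _ _).trans (le_max_right _ _))) hq0
    (fun h => (hC1 h).trans ((le_max_right _ _).trans (le_max_right _ _))) hq1
    hγ hγ0 hγ1 hg hγg hV hS hθ
  set W := (∫⁻ t in Ioc 0 1, ‖g t‖ₑ ^ 2) + ∫⁻ t in Ioc 0 1, gradNorm lam f (γ t) ^ 2 with hW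
  let e : ℕ → ℝ := fun n => 1 / ((n : ℝ) + 1)
  have he : ∀ n, 0 < e n := fun n => by positivity
  have hanti : ∀ m n, m ≤ n → e n ≤ e m := fun m n hmn => Nat.one_div_le_one_div hmn
  let Q : ℕ → ℕ → Prop := fun n h => ∃ η : ℝ → H, ContinuousOn η (Icc 0 1) ∧
    (∀ t ∈ Icc (0 : ℝ) 1, ‖η t - γ t‖ ≤ e n) ∧
    Theta lam (fh h) (xh0 h) (xh1 h) η ≤ ENNReal.ofReal (1 + e n) * W + ENNReal.ofReal (e n)
  have hQ : ∀ n, ∀ᶠ h in atTop, Q n h := fun n => key (e n) (he n)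
  let N : ℕ → ℕ := fun h => Nat.findGreatest (fun n => Q n h) h
  let γh : ℕ → ℝ → H := fun h => if hq : Q (N h) h then hq.choose else γ
  have main : ∀ n, ∀ᶠ h in atTop, (∀ t ∈ Icc (0 : ℝ) 1, ‖γh h t - γ t‖ ≤ e n) ∧
    Theta lam (fh h) (xh0 h) (xh1 h) (γh h)
      ≤ ENNReal.ofReal (1 + e n) * W + ENNReal.ofReal (e n) := by
    intro n
    filter_upwards [hQ n, eventually_ge_atTop n] with h hq hn
    have h1 : n ≤ N h := Nat.le_findGreatest hn hq
    have h2 : Q (N h) h := Nat.findGreatest_spec (P := fun n => Q n h) hn hq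
    have h3 : γh h = h2.choose := dif_pos h2
    have h4 := h2.choose_spec
    rw [← h3] at h4
    have h5 := hanti n (N h) h1
    refine ⟨fun t ht => (h4.2.1 t ht).trans h5, h4.2.2.trans ?_⟩
    refine add_le_add (mul_le_mul_left (ENNReal.ofReal_le_ofReal ?_) _)
      (ENNReal.ofReal_le_ofReal h5)
    linarith
  have hlim : Tendsto e atTop (𝓝 0) := tendsto_one_div_add_atTop_nhds_zero_nat
  refine ⟨γh, fun h => ?_, ?_, ?_⟩
  · by_cases hq : Q (N h) h
    · have h3 : γh h = hq.choose := dif_pos hq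
      rw [h3]
      exact hq.choose_spec.1
    · have h3 : γh h = γ := dif_neg hq
      rw [h3]
      exact hγ
  · rw [Metric.tendstoUniformlyOn_iff]
    intro ε hε
    obtain ⟨n, hn⟩ := (hlim.eventually (gt_mem_nhds hε)).exists
    filter_upwards [main n] with h hh t ht
    rw [dist_comm, dist_eq_norm]
    exact (hh.1 t ht).trans_lt hn
  · have hb : ∀ n, Filter.limsup (fun h => Theta lam (fh h) (xh0 h) (xh1 h) (γh h)) atTop
        ≤ ENNReal.ofReal (1 + e n) * W + ENNReal.ofReal (e n) := fun n =>
      limsup_le_of_le (by isBoundedDefault) ((main n).mono fun h hh => hh.2)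
    have ht : Tendsto (fun n => ENNReal.ofReal (1 + e n) * W + ENNReal.ofReal (e n)) atTop
        (𝓝 (ENNReal.ofReal (1 + 0) * W + ENNReal.ofReal 0)) := by
      refine Tendsto.add (ENNReal.Tendsto.mul_const
        (ENNReal.tendsto_ofReal (hlim.const_add 1)) (Or.inr htop)) (ENNReal.tendsto_ofReal hlim)
    have h6 := ge_of_tendsto' ht hb
    simpa using h6

/-- Γ-convergence of the constrained action functionals under Mosco
convergence of uniformly λ-convex functions. -/
theorem statement0 (lam : ℝ) (fh : ℕ → H → EReal) (f : H → EReal)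
    (hfh_proper : ∀ h, ProperFn (fh h)) (hfh_conv : ∀ h, LambdaConvex lam (fh h))
    (hfh_lsc : ∀ h, LowerSemicontinuous (fh h))
    (hf_proper : ProperFn f) (hf_conv : LambdaConvex lam f) (hf_lsc : LowerSemicontinuous f)
    (hM : Mosco fh f)
    (xh0 xh1 : ℕ → H) (x0 x1 : H)
    (hx0 : Tendsto xh0 atTop (𝓝 x0)) (hx1 : Tendsto xh1 atTop (𝓝 x1))
    (hb0 : (⨆ h, gradNorm lam (fh h) (xh0 h)) ≠ ⊤)
    (hb1 : (⨆ h, gradNorm lam (fh h) (xh1 h)) ≠ ⊤) :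
    (∀ γ : ℝ → H, ContinuousOn γ (Icc 0 1) →
      ∃ γh : ℕ → ℝ → H, (∀ h, ContinuousOn (γh h) (Icc 0 1)) ∧
        TendstoUniformlyOn γh γ atTop (Icc 0 1) ∧
        Filter.limsup (fun h => Theta lam (fh h) (xh0 h) (xh1 h) (γh h)) atTop
          ≤ Theta lam f x0 x1 γ) ∧
    (∀ (γh : ℕ → ℝ → H) (γ : ℝ → H), (∀ h, ContinuousOn (γh h) (Icc 0 1)) →
      ContinuousOn γ (Icc 0 1) → TendstoUniformlyOn γh γ atTop (Icc 0 1) →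
      Theta lam f x0 x1 γ
        ≤ Filter.liminf (fun h => Theta lam (fh h) (xh0 h) (xh1 h) (γh h)) atTop) := by
  exact ⟨fun γ hγ => limsup_part lam fh f hfh_proper hfh_conv hfh_lsc hf_proper hf_lsc hM
      xh0 xh1 x0 x1 hx0 hx1 hb0 hb1 γ hγ,
    fun γh γ hγh _ hu => liminf_part lam fh f hfh_proper hfh_lsc hf_proper hM
      xh0 xh1 x0 x1 hx0 hx1 γh γ hγh hu⟩

end
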